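/- arXiv:2506.02385 — 12 statements merged into one kernel-verified Lean document; each statement's English description precedes it below -/
import Mathlib

section
/- Let α and β be finite types, P a transition matrix over α × β admitting a strictly positive stationary probability vector μ. Suppose P = ∑_{j∈K} x_j (A_j ⊗ B_j) for a finite index set K, reals x_j with ∑_{j∈K} x_j = 1, transition matrices A_j over α, and transition matrices B_j over β. Then the marginalized local transition matrix P_A equals ∑_{j∈K} x_j A_j, and the marginalized local transition matrix P_B equals ∑_{j∈K} x_j B_j. -/
open Matrix

/-- A transition matrix: nonnegative entries, each row sums to 1. -/
def IsTransition {ι : Type*} [Fintype ι] (P : Matrix ι ι ℝ) : Prop :=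
  (∀ i j, 0 ≤ P i j) ∧ ∀ i, ∑ j, P i j = 1

/-- Kronecker product of a matrix over `α` and a matrix over `β`. -/
def kron {α β : Type*} (A : Matrix α α ℝ) (B : Matrix β β ℝ) :
    Matrix (α × β) (α × β) ℝ :=
  Matrix.of fun p q => A p.1 q.1 * B p.2 q.2

/-- The marginalized local transition matrix of agent `A`. -/
noncomputable def localA {α β : Type*} [Fintype α] [Fintype β]
    (P : Matrix (α × β) (α × β) ℝ) (μ : α × β → ℝ) : Matrix α α ℝ :=
  Matrix.of fun a a' =>
    ∑ b, (μ (a, b) / ∑ b', μ (a, b')) * ∑ b', P (a, b) (a', b')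

/-- The marginalized local transition matrix of agent `B`. -/
noncomputable def localB {α β : Type*} [Fintype α] [Fintype β]
    (P : Matrix (α × β) (α × β) ℝ) (μ : α × β → ℝ) : Matrix β β ℝ :=
  Matrix.of fun b b' =>
    ∑ a, (μ (a, b) / ∑ a', μ (a', b)) * ∑ a', P (a, b) (a', b')

/-- Averaging a constant against normalized positive weights returns the constant. -/
lemma sum_div_sum_mul_const {ι : Type*} [Fintype ι] [Nonempty ι] (w : ι → ℝ)
    (hw : ∀ i, 0 < w i) (c : ℝ) : ∑ i, (w i / ∑ k, w k) * c = c := by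
  have hpos : 0 < ∑ k, w k := Finset.sum_pos (fun i _ => hw i) Finset.univ_nonempty
  rw [← Finset.sum_mul, ← Finset.sum_div, div_self hpos.ne', one_mul]

/-- Summing out the second coordinate of a combination of Kronecker products. -/
lemma sum_snd_sum_smul_kron {α β K : Type*} [Fintype β] [Fintype K] (x : K → ℝ)
    (A : K → Matrix α α ℝ) (B : K → Matrix β β ℝ) (hB : ∀ j, IsTransition (B j))
    (a a' : α) (b : β) :
    ∑ b', (∑ j, x j • kron (A j) (B j)) (a, b) (a', b') = (∑ j, x j • A j) a a' := by
  simp only [Matrix.sum_apply, Matrix.smul_apply, smul_eq_mul, kron, Matrix.of_apply]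
  rw [Finset.sum_comm]
  simp only [← Finset.mul_sum, (hB _).2, mul_one]

/-- Summing out the first coordinate of a combination of Kronecker products. -/
lemma sum_fst_sum_smul_kron {α β K : Type*} [Fintype α] [Fintype K] (x : K → ℝ)
    (A : K → Matrix α α ℝ) (B : K → Matrix β β ℝ) (hA : ∀ j, IsTransition (A j))
    (a : α) (b b' : β) :
    ∑ a', (∑ j, x j • kron (A j) (B j)) (a, b) (a', b') = (∑ j, x j • B j) b b' := by
  simp only [Matrix.sum_apply, Matrix.smul_apply, smul_eq_mul, kron, Matrix.of_apply]
  rw [Finset.sum_comm]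
  simp only [← Finset.mul_sum, ← Finset.sum_mul, (hA _).2, one_mul]

/-- If a transition matrix with strictly positive stationary distribution is separable,
then its marginalized local transitions are the corresponding linear combinations. -/
theorem stmt1 {α β K : Type*} [Fintype α] [Fintype β] [Fintype K]
    (P : Matrix (α × β) (α × β) ℝ) (hP : IsTransition P)
    (μ : α × β → ℝ) (hμpos : ∀ p, 0 < μ p) (hμsum : ∑ p, μ p = 1)
    (hstat : ∀ q, ∑ p, μ p * P p q = μ q)
    (x : K → ℝ) (hx : ∑ j, x j = 1)
    (A : K → Matrix α α ℝ) (B : K → Matrix β β ℝ)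
    (hA : ∀ j, IsTransition (A j)) (hB : ∀ j, IsTransition (B j))
    (hsep : P = ∑ j, x j • kron (A j) (B j)) :
    localA P μ = ∑ j, x j • A j ∧ localB P μ = ∑ j, x j • B j := by
  have hne : Nonempty (α × β) := by
    by_contra h
    rw [not_nonempty_iff] at h
    simp at hμsum
  obtain ⟨a₀, b₀⟩ := hne
  have : Nonempty α := ⟨a₀⟩
  have : Nonempty β := ⟨b₀⟩
  subst hsep
  constructor
  · ext a a'
    simp only [localA, Matrix.of_apply, sum_snd_sum_smul_kron x A B hB]
    exact sum_div_sum_mul_const (fun b => μ (a, b)) (fun b => hμpos _) _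
  · ext b b'
    simp only [localB, Matrix.of_apply, sum_fst_sum_smul_kron x A B hA]
    exact sum_div_sum_mul_const (fun a => μ (a, b)) (fun a => hμpos _) _
end

section
/- For every natural number m ≥ 1, the ℝ-linear span (inside the vector space of m × m real matrices) of the set of all m × m row-stochastic matrices has dimension m² − m + 1. -/
open Matrix

/-- The linear map sending a matrix to its vector of row sums. -/
noncomputable def rowSums (ι : Type*) [Fintype ι] : Matrix ι ι ℝ →ₗ[ℝ] (ι → ℝ) where
  toFun M i := ∑ j, M i j
  map_add' M N := by ext i; simp [Finset.sum_add_distrib]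
  map_smul' c M := by ext i; simp [Finset.mul_sum]

@[simp]
lemma rowSums_apply {ι : Type*} [Fintype ι] (M : Matrix ι ι ℝ) (i : ι) :
    rowSums ι M i = ∑ j, M i j := rfl

lemma rowSums_surjective (ι : Type*) [Fintype ι] : Function.Surjective (rowSums ι) := by
  classical
  intro v
  exact ⟨Matrix.diagonal v, by ext i; simp [Matrix.diagonal_apply]⟩

/-- A matrix with positive entries and constant row sums is a multiple of a stochastic matrix. -/
lemma mem_span_isTransition_of_pos {ι : Type*} [Fintype ι] [Nonempty ι] {M : Matrix ι ι ℝ}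
    (hpos : ∀ i j, 0 < M i j) {c : ℝ} (hc : ∀ i, ∑ j, M i j = c) :
    M ∈ Submodule.span ℝ {P : Matrix ι ι ℝ | IsTransition P} := by
  obtain ⟨i₀⟩ := ‹Nonempty ι›
  have hcpos : 0 < c := by
    rw [← hc i₀]
    exact Finset.sum_pos (fun j _ => hpos i₀ j) ⟨i₀, Finset.mem_univ _⟩
  have hM : M = c • (c⁻¹ • M) := by rw [smul_smul, mul_inv_cancel₀ hcpos.ne', one_smul]
  rw [hM]
  refine Submodule.smul_mem _ _ (Submodule.subset_span ⟨fun i j => ?_, fun i => ?_⟩)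
  · exact mul_nonneg (inv_nonneg.2 hcpos.le) (hpos i j).le
  · simp [← Finset.mul_sum, hc i, hcpos.ne']

/-- The span of the stochastic matrices consists of the matrices with constant row sums. -/
lemma span_isTransition_eq_comap (ι : Type*) [Fintype ι] [Nonempty ι] :
    Submodule.span ℝ {P : Matrix ι ι ℝ | IsTransition P} =
      (Submodule.span ℝ {(1 : ι → ℝ)}).comap (rowSums ι) := by
  apply le_antisymm
  · rw [Submodule.span_le]
    intro P hP
    have h : rowSums ι P = 1 := funext hP.2
    simp [h]
  · intro M hM
    obtain ⟨c, hc⟩ := Submodule.mem_span_singleton.1 (Submodule.mem_comap.1 hM)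
    have hrow (i : ι) : ∑ j, M i j = c := by
      simpa using (congrFun hc i).symm
    obtain ⟨t, ht0, ht⟩ : ∃ t : ℝ, 0 < t ∧ ∀ i j, 0 < M i j + t := by
      obtain ⟨b, hb⟩ := (Set.finite_range fun p : ι × ι => -M p.1 p.2).bddAbove
      refine ⟨max b 0 + 1, by positivity, fun i j => ?_⟩
      have hij : -M i j ≤ b := hb ⟨(i, j), rfl⟩
      linarith [le_max_left b 0]
    have hsub : M = (M + Matrix.of fun _ _ => t) - Matrix.of fun _ _ => t := by simp
    rw [hsub]
    refine Submodule.sub_mem _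
      (mem_span_isTransition_of_pos (c := c + Fintype.card ι * t) ht fun i => ?_)
      (mem_span_isTransition_of_pos (c := Fintype.card ι * t) (fun _ _ => ht0) fun i => ?_)
    · simp [Finset.sum_add_distrib, hrow i]
    · simp

lemma finrank_span_isTransition_add (ι : Type*) [Fintype ι] [Nonempty ι] :
    Module.finrank ℝ (Submodule.span ℝ {P : Matrix ι ι ℝ | IsTransition P}) + Fintype.card ι =
      Fintype.card ι ^ 2 + 1 := by
  set W := Submodule.span ℝ {(1 : ι → ℝ)}
  have hker : Submodule.span ℝ {P : Matrix ι ι ℝ | IsTransition P} =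
      LinearMap.ker (W.mkQ ∘ₗ rowSums ι) := by
    rw [LinearMap.ker_comp, Submodule.ker_mkQ, span_isTransition_eq_comap]
  have hrange : LinearMap.range (W.mkQ ∘ₗ rowSums ι) = ⊤ :=
    LinearMap.range_eq_top.2 (W.mkQ_surjective.comp (rowSums_surjective ι))
  have hrank := LinearMap.finrank_range_add_finrank_ker (W.mkQ ∘ₗ rowSums ι)
  rw [hrange, finrank_top, ← hker, Module.finrank_matrix, Module.finrank_self, mul_one] at hrank
  have hquot := W.finrank_quotient_add_finrank
  rw [finrank_span_singleton (one_ne_zero : (1 : ι → ℝ) ≠ 0), Module.finrank_fintype_fun_eq_card]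
    at hquot
  rw [sq]
  omega

/-- The span of the set of `m × m` row-stochastic matrices has dimension `m² − m + 1`. -/
theorem stmt3 (m : ℕ) (hm : 1 ≤ m) :
    Module.finrank ℝ
        ↥(Submodule.span ℝ {M : Matrix (Fin m) (Fin m) ℝ | IsTransition M})
      = m ^ 2 - m + 1 := by
  have : Nonempty (Fin m) := ⟨⟨0, hm⟩⟩
  have h := finrank_span_isTransition_add (Fin m)
  rw [Fintype.card_fin] at h
  have hle : m ≤ m ^ 2 := Nat.le_self_pow two_ne_zero m
  omega
end

section
/- For every natural number m ≥ 1, the ℝ-linear span (inside the vector space of m² × m² real matrices) of the set { A ⊗ B : A and B are m × m row-stochastic matrices }, where ⊗ denotes the Kronecker product, has dimension (m² − m + 1)². -/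
open Matrix

/-- The subspace of matrices all of whose row sums are equal. -/
noncomputable def equalRowSums (ι : Type*) [Fintype ι] : Submodule ℝ (Matrix ι ι ℝ) :=
  (Submodule.span ℝ {(1 : ι → ℝ)}).comap ((Matrix.mulVecBilin ℝ ℝ).flip 1)

theorem mem_equalRowSums {ι : Type*} [Fintype ι] {A : Matrix ι ι ℝ} :
    A ∈ equalRowSums ι ↔ ∃ c : ℝ, ∀ i, ∑ j, A i j = c := by
  simp [equalRowSums, Submodule.mem_span_singleton, funext_iff, Matrix.mulVec, dotProduct, eq_comm]

/-- The row-stochastic matrices span the matrices with equal row sums. -/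
theorem span_isTransition_eq_equalRowSums (ι : Type*) [Fintype ι] [Nonempty ι] :
    Submodule.span ℝ {A : Matrix ι ι ℝ | IsTransition A} = equalRowSums ι := by
  apply le_antisymm
  · rw [Submodule.span_le]
    exact fun A hA => mem_equalRowSums.2 ⟨1, hA.2⟩
  · intro A hA
    obtain ⟨c, hc⟩ := mem_equalRowSums.1 hA
    have hn : (0 : ℝ) < Fintype.card ι := by exact_mod_cast Fintype.card_pos
    let J : Matrix ι ι ℝ := Matrix.of fun _ _ => (Fintype.card ι : ℝ)⁻¹
    have hJ : IsTransition J :=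
      ⟨fun _ _ => inv_nonneg.2 hn.le, fun _ => by simp [J, hn.ne']⟩
    obtain ⟨S, hS, hAS⟩ : ∃ S : ℝ, 0 ≤ S ∧ ∀ i j, |A i j| ≤ S := by
      refine ⟨∑ i, ∑ j, |A i j|, by positivity, fun i j => ?_⟩
      calc |A i j| ≤ ∑ j, |A i j| :=
            Finset.single_le_sum (f := fun j => |A i j|) (fun _ _ => abs_nonneg _)
              (Finset.mem_univ j)
        _ ≤ ∑ i, ∑ j, |A i j| :=
            Finset.single_le_sum (f := fun i => ∑ j, |A i j|) (fun _ _ => by positivity)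
              (Finset.mem_univ i)
    let t : ℝ := Fintype.card ι * S + |c| + 1
    have ht : 0 < c + t := by
      have := neg_abs_le c
      have := mul_nonneg hn.le hS
      simp only [t]; linarith
    have hP : IsTransition ((c + t)⁻¹ • (A + t • J)) := by
      refine ⟨fun i j => ?_, fun i => ?_⟩
      · have h : S ≤ t * (Fintype.card ι : ℝ)⁻¹ := by
          rw [← div_eq_mul_inv, le_div_iff₀ hn]
          simp only [t]
          linarith [abs_nonneg c]
        have := (abs_le.1 (hAS i j)).1
        simp only [Matrix.smul_apply, Matrix.add_apply, smul_eq_mul, J, Matrix.of_apply]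
        exact mul_nonneg (inv_nonneg.2 ht.le) (by linarith)
      · simp only [Matrix.smul_apply, Matrix.add_apply, smul_eq_mul, ← Finset.mul_sum,
          Finset.sum_add_distrib, hc, hJ.2, mul_one]
        exact inv_mul_cancel₀ ht.ne'
    have hA' : A = (c + t) • ((c + t)⁻¹ • (A + t • J)) - t • J := by
      rw [smul_inv_smul₀ ht.ne', add_sub_cancel_right]
    rw [hA']
    exact Submodule.sub_mem _ (Submodule.smul_mem _ _ (Submodule.subset_span hP))
      (Submodule.smul_mem _ _ (Submodule.subset_span hJ))

theorem finrank_equalRowSums (ι : Type*) [Fintype ι] [Nonempty ι] :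
    Module.finrank ℝ (equalRowSums ι) = Fintype.card ι ^ 2 - Fintype.card ι + 1 := by
  classical
  let W := Submodule.span ℝ {(1 : ι → ℝ)}
  let f : Matrix ι ι ℝ →ₗ[ℝ] (ι → ℝ) ⧸ W :=
    W.mkQ ∘ₗ (Matrix.mulVecBilin ℝ ℝ).flip 1
  have hker : LinearMap.ker f = equalRowSums ι := by
    rw [LinearMap.ker_comp, Submodule.ker_mkQ]; rfl
  have hsurj : Function.Surjective f := by
    refine (Submodule.mkQ_surjective W).comp fun v => ⟨Matrix.diagonal v, ?_⟩
    ext i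
    simp [Matrix.mulVec_diagonal]
  have hW : Module.finrank ℝ W = 1 := finrank_span_singleton one_ne_zero
  have hquot := W.finrank_quotient_add_finrank
  have hrank := f.finrank_range_add_finrank_ker
  rw [LinearMap.range_eq_top.2 hsurj, finrank_top, hker, Module.finrank_matrix,
    Module.finrank_self] at hrank
  rw [hW, Module.finrank_pi] at hquot
  have := Nat.le_self_pow two_ne_zero (Fintype.card ι)
  rw [mul_one, ← sq] at hrank
  omega

/-- The Kronecker products of elements of two subspaces span a space whose dimension is the product
of the dimensions. -/
theorem finrank_map₂_kronecker {l m n p K : Type*} [Field K] [Fintype l] [Fintype m]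
    [Fintype n] [Fintype p] [DecidableEq l] [DecidableEq m] [DecidableEq n] [DecidableEq p]
    (V : Submodule K (Matrix l m K)) (W : Submodule K (Matrix n p K)) :
    Module.finrank K (Submodule.map₂ (Matrix.kroneckerBilinear (R := K) (α := K)) V W) =
      Module.finrank K V * Module.finrank K W := by
  have h : Submodule.map₂ (Matrix.kroneckerBilinear (R := K) (α := K)) V W =
      (LinearMap.range (TensorProduct.mapIncl V W)).map
        (kroneckerLinearEquiv l m n p K).toLinearMap := by
    rw [TensorProduct.range_mapIncl, Submodule.map_map₂]
    rfl
  rw [h, LinearEquiv.finrank_map_eq, LinearMap.finrank_range_of_inj,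
    Module.finrank_tensorProduct]
  exact TensorProduct.map_injective_of_flat_flat _ _ V.injective_subtype W.injective_subtype

/-- The span of Kronecker products of `m × m` row-stochastic matrices
has dimension `(m² − m + 1)²`. -/
theorem stmt4 (m : ℕ) (hm : 1 ≤ m) :
    Module.finrank ℝ
        ↥(Submodule.span ℝ
          {M : Matrix (Fin m × Fin m) (Fin m × Fin m) ℝ |
            ∃ A B : Matrix (Fin m) (Fin m) ℝ,
              IsTransition A ∧ IsTransition B ∧ M = kron A B})
      = (m ^ 2 - m + 1) ^ 2 := by
  have : Nonempty (Fin m) := ⟨⟨0, hm⟩⟩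
  have hset : {M : Matrix (Fin m × Fin m) (Fin m × Fin m) ℝ |
      ∃ A B : Matrix (Fin m) (Fin m) ℝ, IsTransition A ∧ IsTransition B ∧ M = kron A B} =
      Set.image2 (fun A B => Matrix.kroneckerBilinear (R := ℝ) A B)
        {A | IsTransition A} {B | IsTransition B} := by
    ext M
    constructor
    · rintro ⟨A, B, hA, hB, rfl⟩
      exact ⟨A, hA, B, hB, rfl⟩
    · rintro ⟨A, hA, B, hB, rfl⟩
      exact ⟨A, B, hA, hB, rfl⟩
  rw [hset, ← Submodule.map₂_span_span, span_isTransition_eq_equalRowSums,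
    finrank_map₂_kronecker, finrank_equalRowSums, Fintype.card_fin, sq (m ^ 2 - m + 1)]
end

section
/- Fix m ≥ 1. Let e ∈ ℝ^m be the all-ones vector and, for 1 ≤ j ≤ m − 1, let ε_j = e₁ − e_{j+1}, where e_i denotes the i-th standard basis vector of ℝ^m. Equip the space of m² × m² real matrices with the Frobenius inner product ⟨X, Y⟩ = Tr(Xᵀ Y). Then the orthogonal complement of the ℝ-linear span of { A ⊗ B : A, B m × m row-stochastic } equals the set of all matrices of the form ∑_{j=1}^{m−1} (ε_j eᵀ) ⊗ W_j¹ + ∑_{j=1}^{m−1} W_j² ⊗ (ε_j eᵀ), where W_j¹, W_j² range over arbitrary m × m real matrices. -/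
open Matrix

/-- `ε_j = e₁ − e_{j+1}` : first entry `1`, `(j+1)`-th entry `−1`, the rest `0`. -/
def eps (m : ℕ) (j : Fin (m - 1)) : Fin m → ℝ :=
  fun i => (if (i : ℕ) = 0 then 1 else 0) - (if (i : ℕ) = (j : ℕ) + 1 then 1 else 0)

/-- The rank-one matrix `ε_j eᵀ` (every column equal to `ε_j`). -/
def epsE (m : ℕ) (j : Fin (m - 1)) : Matrix (Fin m) (Fin m) ℝ :=
  Matrix.of fun i _ => eps m j i

open scoped Kronecker

theorem kron_eq_kronecker {α β : Type*} (A : Matrix α α ℝ) (B : Matrix β β ℝ) :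
    kron A B = A ⊗ₖ B := rfl

theorem sum_eps (n : ℕ) (j : Fin n) : ∑ i, eps (n + 1) j i = 0 := by
  rw [Fin.sum_univ_succ]
  simp [eps, Fin.val_inj]

/-- The vectors `ε_j` span the vectors whose entries sum to zero. -/
theorem eq_sum_eps_of_sum_eq_zero {n : ℕ} {v : Fin (n + 1) → ℝ} (hv : ∑ i, v i = 0)
    (i : Fin (n + 1)) : v i = ∑ j : Fin n, eps (n + 1) j i * -v j.succ := by
  rw [Fin.sum_univ_succ] at hv
  cases i using Fin.cases with
  | zero => simp [eps, eq_neg_of_add_eq_zero_left hv]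
  | succ i => simp [eps, Fin.val_inj]

theorem trace_transpose_mul_epsE {n : ℕ} {A : Matrix (Fin (n + 1)) (Fin (n + 1)) ℝ}
    (hA : IsTransition A) (j : Fin n) : (Aᵀ * epsE (n + 1) j).trace = 0 := by
  simp only [Matrix.trace, Matrix.diag, Matrix.mul_apply, Matrix.transpose_apply, epsE,
    Matrix.of_apply]
  rw [Finset.sum_comm]
  simp only [← Finset.sum_mul, hA.2, one_mul]
  exact sum_eps n j

/-- The transition matrix that moves every state `i` to `f i`. -/
def functionMatrix {ι : Type*} [DecidableEq ι] (f : ι → ι) : Matrix ι ι ℝ :=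
  Matrix.of fun i k => if f i = k then 1 else 0

theorem isTransition_functionMatrix {ι : Type*} [Fintype ι] [DecidableEq ι] (f : ι → ι) :
    IsTransition (functionMatrix f) := by
  refine ⟨fun i j => ?_, fun i => by simp [functionMatrix]⟩
  simp only [functionMatrix, Matrix.of_apply]
  split_ifs <;> norm_num

theorem trace_transpose_kron_functionMatrix_mul {ι : Type*} [Fintype ι] [DecidableEq ι]
    (f g : ι → ι) (Y : Matrix (ι × ι) (ι × ι) ℝ) :
    ((kron (functionMatrix f) (functionMatrix g))ᵀ * Y).trace
      = ∑ i, ∑ j, Y (i, j) (f i, g j) := by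
  simp only [Matrix.trace, Matrix.diag, Matrix.mul_apply, Matrix.transpose_apply]
  rw [Finset.sum_comm]
  simp [kron, functionMatrix, Fintype.sum_prod_type]

/-- If `∑ i, φ i (f i)` vanishes for every choice function `f`, each `φ i` is constant. -/
theorem eq_of_forall_sum_eq_zero {ι κ : Type*} [Fintype ι] {φ : ι → κ → ℝ}
    (h : ∀ f : ι → κ, ∑ i, φ i (f i) = 0) (i : ι) (k l : κ) : φ i k = φ i l := by
  classical
  have hk := h (Function.update (fun _ => l) i k)
  have hl := h fun _ => l
  rw [← Finset.add_sum_erase _ _ (Finset.mem_univ i)] at hk hl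
  have heq : ∑ x ∈ Finset.univ.erase i, φ x (Function.update (fun _ => l) i k x)
      = ∑ x ∈ Finset.univ.erase i, φ x l :=
    Finset.sum_congr rfl fun x hx => by
      rw [Function.update_of_ne (Finset.ne_of_mem_erase hx)]
  rw [heq, Function.update_self] at hk
  linarith

/-- A matrix orthogonal to all `functionMatrix f ⊗ functionMatrix g` splits into a part whose
entries sum to zero over the first row index and a part whose entries sum to zero over the
second row index, each constant in the corresponding column index. -/
theorem exists_zero_sum_decomposition {ι : Type*} [Fintype ι] [DecidableEq ι] (o : ι)
    {Y : Matrix (ι × ι) (ι × ι) ℝ} (h : ∀ f g : ι → ι, ∑ i, ∑ j, Y (i, j) (f i, g j) = 0) :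
    ∃ F G : ι → ι → ι → ℝ, (∀ j l, ∑ i, F i j l = 0) ∧ (∀ i k, ∑ j, G j i k = 0) ∧
      ∀ i j k l, Y (i, j) (k, l) = F i j l + G j i k := by
  have hrow (g : ι → ι) (i k : ι) :
      ∑ j, Y (i, j) (k, g j) = ∑ j, Y (i, j) (o, g j) :=
    eq_of_forall_sum_eq_zero (φ := fun i k => ∑ j, Y (i, j) (k, g j)) (fun f => h f g) i k o
  have hcol (j l : ι) : ∑ i, Y (i, j) (o, l) = ∑ i, Y (i, j) (o, o) :=
    eq_of_forall_sum_eq_zero (φ := fun j l => ∑ i, Y (i, j) (o, l))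
      (fun g => by rw [Finset.sum_comm]; exact h (fun _ => o) g) j l o
  have hmixed (i j k l : ι) :
      Y (i, j) (k, l) - Y (i, j) (o, l) = Y (i, j) (k, o) - Y (i, j) (o, o) :=
    eq_of_forall_sum_eq_zero (φ := fun j l => Y (i, j) (k, l) - Y (i, j) (o, l))
      (fun g => by rw [Finset.sum_sub_distrib, hrow, sub_self]) j l o
  have htotal : ∑ j, ∑ i, Y (i, j) (o, o) = 0 := by
    rw [Finset.sum_comm]; exact h (fun _ => o) fun _ => o
  refine ⟨fun i j l => Y (i, j) (o, l) - if i = o then ∑ x, Y (x, j) (o, o) else 0,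
    fun j i k => Y (i, j) (k, o) - Y (i, j) (o, o) + if i = o then ∑ x, Y (x, j) (o, o) else 0,
    fun j l => ?_, fun i k => ?_, fun i j k l => ?_⟩
  · simp [Finset.sum_sub_distrib, hcol]
  · rw [Finset.sum_add_distrib, Finset.sum_sub_distrib, hrow (fun _ => o)]
    split_ifs <;> simp [htotal]
  · linarith [hmixed i j k l]


/-- The orthogonal complement (w.r.t. the Frobenius inner product `Tr(Xᵀ Y)`) of the span
of Kronecker products of row-stochastic matrices consists exactly of matrices of the form
`∑ⱼ (ε_j eᵀ) ⊗ W_j¹ + ∑ⱼ W_j² ⊗ (ε_j eᵀ)`. -/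
theorem stmt5 (m : ℕ) (hm : 1 ≤ m) :
    {Y : Matrix (Fin m × Fin m) (Fin m × Fin m) ℝ |
        ∀ X ∈ Submodule.span ℝ
            {M : Matrix (Fin m × Fin m) (Fin m × Fin m) ℝ |
              ∃ A B : Matrix (Fin m) (Fin m) ℝ,
                IsTransition A ∧ IsTransition B ∧ M = kron A B},
          (Xᵀ * Y).trace = 0}
      = {Y | ∃ W1 W2 : Fin (m - 1) → Matrix (Fin m) (Fin m) ℝ,
            Y = (∑ j, kron (epsE m j) (W1 j)) + ∑ j, kron (W2 j) (epsE m j)} := by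

  obtain ⟨n, rfl⟩ : ∃ n, m = n + 1 := ⟨m - 1, by omega⟩
  ext Y
  constructor
  · intro hY
    obtain ⟨F, G, hF, hG, hFG⟩ := exists_zero_sum_decomposition (0 : Fin (n + 1)) (Y := Y)
      fun f g => by
        rw [← trace_transpose_kron_functionMatrix_mul]
        exact hY _ (Submodule.subset_span ⟨_, _, isTransition_functionMatrix f,
          isTransition_functionMatrix g, rfl⟩)
    refine ⟨fun t => Matrix.of fun j l => -F (Fin.succ t) j l,
      fun t => Matrix.of fun i k => -G (Fin.succ t) i k, ?_⟩
    ext ⟨i, j⟩ ⟨k, l⟩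
    rw [hFG, eq_sum_eps_of_sum_eq_zero (hF j l) i, eq_sum_eps_of_sum_eq_zero (hG i k) j]
    simp only [Matrix.add_apply, Matrix.sum_apply, kron, epsE, Matrix.of_apply]
    exact congrArg₂ _ rfl (Finset.sum_congr rfl fun _ _ => mul_comm _ _)
  · rintro ⟨W1, W2, rfl⟩ X hX
    induction hX using Submodule.span_induction with
    | mem X hX =>
      obtain ⟨A, B, hA, hB, rfl⟩ := hX
      simp only [Matrix.mul_add, Matrix.mul_sum, Matrix.trace_add, Matrix.trace_sum,
        kron_eq_kronecker, ← Matrix.kroneckerMap_transpose, ← Matrix.mul_kronecker_mul,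
        Matrix.trace_kronecker]
      rw [Finset.sum_eq_zero fun j _ => by rw [trace_transpose_mul_epsE hA j, zero_mul],
        Finset.sum_eq_zero fun j _ => by rw [trace_transpose_mul_epsE hB j, mul_zero], add_zero]
    | zero => simp
    | add X X' _ _ hX hX' => rw [Matrix.transpose_add, Matrix.add_mul, Matrix.trace_add, hX, hX',
        add_zero]
    | smul c X _ hX => rw [Matrix.transpose_smul, Matrix.smul_mul, Matrix.trace_smul, hX,
        smul_zero]
end

section
/- Let P be a transition matrix over a finite type ι and let γ ∈ [0,1). Then the matrix I − γP is invertible, its inverse (I − γP)^{-1} has all entries nonnegative, and the matrix (1 − γ)(I − γP)^{-1} is a transition matrix (in particular, each row of (I − γP)^{-1} sums to 1/(1 − γ)). -/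
open Matrix

/-- Minimum principle: if `(I − γP) v` is entrywise nonnegative, then so is `v`. -/
theorem IsTransition.nonneg_of_nonneg_mulVec {ι : Type*} [Fintype ι] [DecidableEq ι]
    {P : Matrix ι ι ℝ} (hP : IsTransition P) {γ : ℝ} (hγ0 : 0 ≤ γ) (hγ1 : γ < 1)
    {v : ι → ℝ} (hv : ∀ i, 0 ≤ ((1 - γ • P) *ᵥ v) i) (i : ι) : 0 ≤ v i := by
  have : Nonempty ι := ⟨i⟩
  obtain ⟨k, hk⟩ := Finite.exists_min v
  have hsum : v k ≤ ∑ j, P k j * v j :=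
    calc v k = ∑ j, P k j * v k := by rw [← Finset.sum_mul, hP.2 k, one_mul]
      _ ≤ ∑ j, P k j * v j :=
        Finset.sum_le_sum fun j _ => mul_le_mul_of_nonneg_left (hk j) (hP.1 k j)
  have hvk : 0 ≤ v k - γ * ∑ j, P k j * v j := by
    have h := hv k
    rw [sub_mulVec, one_mulVec, smul_mulVec] at h
    exact h
  have hmul := mul_le_mul_of_nonneg_left hsum hγ0
  have hk0 : 0 ≤ v k := by
    by_contra! h
    nlinarith
  exact hk0.trans (hk i)

theorem IsTransition.isUnit_one_sub_smul {ι : Type*} [Fintype ι] [DecidableEq ι]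
    {P : Matrix ι ι ℝ} (hP : IsTransition P) {γ : ℝ} (hγ0 : 0 ≤ γ) (hγ1 : γ < 1) :
    IsUnit (1 - γ • P) := by
  rw [← mulVec_injective_iff_isUnit]
  intro v w hvw
  replace hvw : (1 - γ • P) *ᵥ v = (1 - γ • P) *ᵥ w := hvw
  funext i
  refine le_antisymm (sub_nonneg.1 ?_) (sub_nonneg.1 ?_)
  · exact hP.nonneg_of_nonneg_mulVec hγ0 hγ1 (v := w - v) (by simp [mulVec_sub, hvw]) i
  · exact hP.nonneg_of_nonneg_mulVec hγ0 hγ1 (v := v - w) (by simp [mulVec_sub, hvw]) i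

/-- For a transition matrix `P` and `γ ∈ [0,1)`: `I − γP` is invertible, its inverse is
entrywise nonnegative, `(1 − γ)(I − γP)⁻¹` is a transition matrix, and each row of
`(I − γP)⁻¹` sums to `1/(1 − γ)`. -/
theorem stmt6 {ι : Type*} [Fintype ι] [DecidableEq ι]
    (P : Matrix ι ι ℝ) (hP : IsTransition P)
    (γ : ℝ) (hγ0 : 0 ≤ γ) (hγ1 : γ < 1) :
    IsUnit (1 - γ • P) ∧
    (∀ i j, 0 ≤ (1 - γ • P)⁻¹ i j) ∧
    IsTransition ((1 - γ) • (1 - γ • P)⁻¹) ∧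
    ∀ i, ∑ j, (1 - γ • P)⁻¹ i j = 1 / (1 - γ) := by
  have hunit := hP.isUnit_one_sub_smul hγ0 hγ1
  have hdet := (isUnit_iff_isUnit_det _).1 hunit
  have hnonneg : ∀ i j, 0 ≤ (1 - γ • P)⁻¹ i j := by
    intro i j
    refine hP.nonneg_of_nonneg_mulVec hγ0 hγ1 (v := fun k => (1 - γ • P)⁻¹ k j) (fun k => ?_) i
    change 0 ≤ ((1 - γ • P) * (1 - γ • P)⁻¹) k j
    rw [mul_nonsing_inv _ hdet, one_apply]
    split_ifs <;> norm_num
  have hone : (1 - γ • P) *ᵥ 1 = (1 - γ) • (1 : ι → ℝ) := by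
    have hP1 : P *ᵥ 1 = 1 := funext fun i => by simp [mulVec, dotProduct, hP.2 i]
    rw [sub_mulVec, one_mulVec, smul_mulVec, hP1, sub_smul, one_smul]
  have hinv1 : (1 - γ) • ((1 - γ • P)⁻¹ *ᵥ 1) = (1 : ι → ℝ) := by
    rw [← mulVec_smul, ← hone, mulVec_mulVec, nonsing_inv_mul _ hdet, one_mulVec]
  have hrow : ∀ i, (1 - γ) * ∑ j, (1 - γ • P)⁻¹ i j = 1 := fun i => by
    simpa [mulVec, dotProduct] using congrFun hinv1 i
  refine ⟨hunit, hnonneg, ⟨fun i j => ?_, fun i => ?_⟩, fun i => ?_⟩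
  · exact mul_nonneg (sub_pos.2 hγ1).le (hnonneg i j)
  · simpa [Finset.mul_sum] using hrow i
  · exact eq_one_div_of_mul_eq_one_right (hrow i)
end

section
/- Let α and β be finite types, P a transition matrix over α × β, and γ ∈ (0,1). Then P is separable if and only if the transition matrix (1 − γ)(I − γP)^{-1} is separable. -/
open Matrix

/-- A matrix over `α × β` is separable if it is a linear combination (coefficients summing
to 1) of Kronecker products of transition matrices. -/
def Separable {α β : Type*} [Fintype α] [Fintype β]
    (Q : Matrix (α × β) (α × β) ℝ) : Prop :=
  ∃ (K : ℕ) (x : Fin K → ℝ) (A : Fin K → Matrix α α ℝ) (B : Fin K → Matrix β β ℝ),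
    (∑ j, x j = 1) ∧ (∀ j, IsTransition (A j)) ∧ (∀ j, IsTransition (B j)) ∧
    Q = ∑ j, x j • kron (A j) (B j)

theorem IsTransition.one {ι : Type*} [Fintype ι] [DecidableEq ι] :
    IsTransition (1 : Matrix ι ι ℝ) := by
  refine ⟨fun i j => ?_, fun i => by simp [Matrix.one_apply]⟩
  rw [Matrix.one_apply]
  split_ifs <;> norm_num

theorem IsTransition.mulVec_one {ι : Type*} [Fintype ι] {P : Matrix ι ι ℝ}
    (hP : IsTransition P) : P *ᵥ 1 = 1 := by
  ext i
  simp [Matrix.mulVec, dotProduct, hP.2 i]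

theorem IsTransition.mul {ι : Type*} [Fintype ι] {P Q : Matrix ι ι ℝ}
    (hP : IsTransition P) (hQ : IsTransition Q) : IsTransition (P * Q) := by
  refine ⟨fun i j => Finset.sum_nonneg fun k _ => mul_nonneg (hP.1 i k) (hQ.1 k j), fun i => ?_⟩
  have h : (P * Q) *ᵥ 1 = 1 := by
    rw [← Matrix.mulVec_mulVec, hQ.mulVec_one, hP.mulVec_one]
  simpa [Matrix.mulVec, dotProduct] using congrFun h i

theorem IsTransition.kron {α β : Type*} [Fintype α] [Fintype β]
    {A : Matrix α α ℝ} {B : Matrix β β ℝ} (hA : IsTransition A) (hB : IsTransition B) :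
    IsTransition (kron A B) := by
  refine ⟨fun p q => mul_nonneg (hA.1 _ _) (hB.1 _ _), fun p => ?_⟩
  simp [_root_.kron, Fintype.sum_prod_type, ← Finset.mul_sum, hA.2, hB.2]

theorem IsTransition.det_one_sub_smul_ne_zero {ι : Type*} [Fintype ι] [DecidableEq ι]
    {P : Matrix ι ι ℝ} (hP : IsTransition P) {γ : ℝ} (hγ0 : 0 ≤ γ) (hγ1 : γ < 1) :
    (1 - γ • P).det ≠ 0 := by
  refine det_ne_zero_of_sum_row_lt_diag fun i => ?_
  have hoff : ∀ j ∈ Finset.univ.erase i, ‖(1 - γ • P) i j‖ = γ * P i j := fun j hj => by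
    simp [Matrix.one_apply_ne (Finset.ne_of_mem_erase hj).symm, abs_of_nonneg hγ0,
      abs_of_nonneg (hP.1 i j)]
  have hrow := Finset.add_sum_erase Finset.univ (P i) (Finset.mem_univ i)
  rw [hP.2 i] at hrow
  rw [Finset.sum_congr rfl hoff, ← Finset.mul_sum, eq_sub_of_add_eq' hrow]
  refine lt_of_lt_of_le ?_ (le_abs_self _)
  simp only [Matrix.sub_apply, Matrix.one_apply_eq, Matrix.smul_apply, smul_eq_mul]
  linarith

theorem kron_one_one {α β : Type*} [DecidableEq α] [DecidableEq β] :
    kron (1 : Matrix α α ℝ) (1 : Matrix β β ℝ) = 1 :=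
  Matrix.one_kronecker_one

theorem kron_mul_kron {α β : Type*} [Fintype α] [Fintype β]
    (A C : Matrix α α ℝ) (B D : Matrix β β ℝ) :
    kron A B * kron C D = kron (A * C) (B * D) :=
  (Matrix.mul_kronecker_mul A C B D).symm

/-- The monoid of Kronecker products of transition matrices. -/
def kronSubmonoid (α β : Type*) [Fintype α] [Fintype β] [DecidableEq α] [DecidableEq β] :
    Submonoid (Matrix (α × β) (α × β) ℝ) where
  carrier := {Q | ∃ A B, IsTransition A ∧ IsTransition B ∧ kron A B = Q}
  one_mem' := ⟨1, 1, .one, .one, kron_one_one⟩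
  mul_mem' := by
    rintro _ _ ⟨A, B, hA, hB, rfl⟩ ⟨C, D, hC, hD, rfl⟩
    exact ⟨_, _, hA.mul hC, hB.mul hD, (kron_mul_kron A C B D).symm⟩

/-- The algebra spanned by the Kronecker products of transition matrices. -/
def kronAlgebra (α β : Type*) [Fintype α] [Fintype β] [DecidableEq α] [DecidableEq β] :
    Subalgebra ℝ (Matrix (α × β) (α × β) ℝ) :=
  Algebra.adjoin ℝ (kronSubmonoid α β)

theorem mem_kronAlgebra_iff {α β : Type*} [Fintype α] [Fintype β] [DecidableEq α]
    [DecidableEq β] {Q : Matrix (α × β) (α × β) ℝ} :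
    Q ∈ kronAlgebra α β ↔
      Q ∈ Submodule.span ℝ (kronSubmonoid α β : Set (Matrix (α × β) (α × β) ℝ)) := by
  rw [kronAlgebra, ← Subalgebra.mem_toSubmodule, Algebra.adjoin_eq_span, Submonoid.closure_eq]

theorem sum_smul_kron_mulVec_one {α β κ : Type*} [Fintype α] [Fintype β] [Fintype κ]
    (x : κ → ℝ) {A : κ → Matrix α α ℝ} {B : κ → Matrix β β ℝ}
    (hA : ∀ j, IsTransition (A j)) (hB : ∀ j, IsTransition (B j)) :
    (∑ j, x j • kron (A j) (B j)) *ᵥ 1 = fun _ => ∑ j, x j := by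
  simp only [Matrix.sum_mulVec, Matrix.smul_mulVec, ((hA _).kron (hB _)).mulVec_one]
  ext
  simp

theorem separable_iff_mem_kronAlgebra {α β : Type*} [Fintype α] [Fintype β] [DecidableEq α]
    [DecidableEq β] {Q : Matrix (α × β) (α × β) ℝ} :
    Separable Q ↔ Q ∈ kronAlgebra α β ∧ Q *ᵥ 1 = 1 := by
  constructor
  · rintro ⟨K, x, A, B, hx, hA, hB, rfl⟩
    have hmem : ∀ j, kron (A j) (B j) ∈ kronSubmonoid α β := fun j =>
      ⟨_, _, hA j, hB j, rfl⟩
    refine ⟨sum_mem fun j _ =>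
      Subalgebra.smul_mem _ (Algebra.subset_adjoin (hmem j)) (x j), ?_⟩
    rw [sum_smul_kron_mulVec_one x hA hB, hx]
    rfl
  · rintro ⟨hmem, hrow⟩
    rcases isEmpty_or_nonempty (α × β) with h | ⟨⟨p⟩⟩
    · exact ⟨1, fun _ => 1, fun _ => 1, fun _ => 1, by simp, fun _ => .one, fun _ => .one,
        Subsingleton.elim _ _⟩
    · obtain ⟨K, x, g, rfl⟩ := Submodule.mem_span_set'.1 (mem_kronAlgebra_iff.1 hmem)
      choose A B hA hB hg using fun j => (g j).2
      simp only [← hg] at hrow ⊢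
      rw [sum_smul_kron_mulVec_one x hA hB] at hrow
      exact ⟨K, x, A, B, congrFun hrow p, hA, hB, rfl⟩

theorem Subalgebra.matrix_inv_mem {ι F : Type*} [Fintype ι] [DecidableEq ι] [Field F]
    (S : Subalgebra F (Matrix ι ι F)) {M : Matrix ι ι F} (hM : M ∈ S) (hdet : M.det ≠ 0) :
    M⁻¹ ∈ S := by
  have hunit : IsUnit M.det := hdet.isUnit
  have hinj : Function.Injective (LinearMap.mulLeft F (⟨M, hM⟩ : S)) := fun X Y hXY => by
    have h : M * X = M * Y := congrArg Subtype.val hXY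
    apply Subtype.ext
    rw [← Matrix.nonsing_inv_mul_cancel_left M X.1 hunit, h,
      Matrix.nonsing_inv_mul_cancel_left M Y.1 hunit]
  obtain ⟨N, hN⟩ := LinearMap.injective_iff_surjective.1 hinj 1
  rw [Matrix.inv_eq_right_inv (congrArg Subtype.val hN : M * N = 1)]
  exact N.2

/-- `P` is separable iff `(1 − γ)(I − γP)⁻¹` is separable. -/
theorem stmt8 {α β : Type*} [Fintype α] [Fintype β] [DecidableEq α] [DecidableEq β]
    (P : Matrix (α × β) (α × β) ℝ) (hP : IsTransition P)
    (γ : ℝ) (hγ0 : 0 < γ) (hγ1 : γ < 1) :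
    Separable P ↔ Separable ((1 - γ) • (1 - γ • P)⁻¹) := by
  have hdet := hP.det_one_sub_smul_ne_zero hγ0.le hγ1
  have hγ : 1 - γ ≠ 0 := (sub_pos.2 hγ1).ne'
  have hrow : ((1 - γ) • (1 - γ • P)⁻¹) *ᵥ 1 = 1 := by
    have h : (1 - γ • P) *ᵥ 1 = (1 - γ) • (1 : α × β → ℝ) := by
      rw [Matrix.sub_mulVec, Matrix.one_mulVec, Matrix.smul_mulVec, hP.mulVec_one, sub_smul,
        one_smul]
    rw [Matrix.smul_mulVec, ← Matrix.mulVec_smul, ← h, Matrix.mulVec_mulVec,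
      Matrix.nonsing_inv_mul _ hdet.isUnit, Matrix.one_mulVec]
  rw [separable_iff_mem_kronAlgebra, separable_iff_mem_kronAlgebra,
    and_iff_left hP.mulVec_one, and_iff_left hrow]
  constructor
  · intro h
    exact Subalgebra.smul_mem _ (Subalgebra.matrix_inv_mem _
      (sub_mem (one_mem _) (Subalgebra.smul_mem _ h γ)) hdet) _
  · intro h
    have hinv : (1 - γ • P)⁻¹ ∈ kronAlgebra α β := by
      simpa [smul_smul, hγ] using Subalgebra.smul_mem _ h (1 - γ)⁻¹
    have hsub : 1 - γ • P ∈ kronAlgebra α β := by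
      have := Subalgebra.matrix_inv_mem _ hinv
        (Matrix.isUnit_nonsing_inv_det _ hdet.isUnit).ne_zero
      rwa [Matrix.nonsing_inv_nonsing_inv _ hdet.isUnit] at this
    have hsmul := Subalgebra.smul_mem _ (sub_mem (one_mem _) hsub) γ⁻¹
    rwa [sub_sub_cancel, smul_smul, inv_mul_cancel₀ hγ0.ne', one_smul] at hsmul
end

section
/- Let α and β be finite nonempty types, P a transition matrix over α × β, and γ ∈ (0,1). Suppose there exist functions Q_A : (α → ℝ) → (α → ℝ) and Q_B : (β → ℝ) → (β → ℝ) such that for every r_A : α → ℝ and every r_B : β → ℝ, (I − γP)^{-1}(r_A ⊗ e + e ⊗ r_B) = Q_A(r_A) ⊗ e + e ⊗ Q_B(r_B). Then P is separable: there exist a finite index set K, reals x_j with ∑_{j∈K} x_j = 1, transition matrices A_j over α and B_j over β, such that P = ∑_{j∈K} x_j (A_j ⊗ B_j). -/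
open Matrix

/-- The vectors that are constant on the fibres of `π`. -/
def fiberConst {σ τ : Type*} (π : σ → τ) : Submodule ℝ (σ → ℝ) where
  carrier := {v | ∀ p q, π p = π q → v p = v q}
  add_mem' hv hw p q h := by simp only [Pi.add_apply, hv p q h, hw p q h]
  zero_mem' _ _ _ := rfl
  smul_mem' c v hv p q h := by simp only [Pi.smul_apply, hv p q h]

theorem IsTransition.isUnit_det_one_sub_smul {σ : Type*} [Fintype σ] [DecidableEq σ]
    {P : Matrix σ σ ℝ} (hP : IsTransition P) {γ : ℝ} (hγ0 : 0 ≤ γ) (hγ1 : γ < 1) :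
    IsUnit (1 - γ • P).det := by
  refine isUnit_iff_ne_zero.2 (det_ne_zero_of_sum_row_lt_diag fun i => ?_)
  have hrow : P i i + ∑ j ∈ Finset.univ.erase i, P i j = 1 := by
    rw [Finset.add_sum_erase _ _ (Finset.mem_univ i), hP.2 i]
  have hoff : ∑ j ∈ Finset.univ.erase i, ‖(1 - γ • P) i j‖
      = γ * ∑ j ∈ Finset.univ.erase i, P i j := by
    rw [Finset.mul_sum]
    refine Finset.sum_congr rfl fun j hj => ?_
    have hij : i ≠ j := (Finset.ne_of_mem_erase hj).symm
    simp [Matrix.one_apply_ne hij, abs_of_nonneg hγ0, abs_of_nonneg (hP.1 i j)]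
  rw [hoff]
  refine lt_of_lt_of_le ?_ (le_abs_self _)
  simp only [Matrix.sub_apply, Matrix.one_apply_eq, Matrix.smul_apply, smul_eq_mul]
  nlinarith

/-- A submodule preserved by the inverse of `1 - γ • P`
is preserved by `P`. -/
theorem mulVec_mem_of_inv_mulVec_mem {σ : Type*} [Fintype σ] [DecidableEq σ]
    {P : Matrix σ σ ℝ} {γ : ℝ} (hγ : γ ≠ 0) (hdet : IsUnit (1 - γ • P).det)
    {W : Submodule ℝ (σ → ℝ)} (hW : ∀ v ∈ W, (1 - γ • P)⁻¹ *ᵥ v ∈ W)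
    {v : σ → ℝ} (hv : v ∈ W) : P *ᵥ v ∈ W := by
  let f : W →ₗ[ℝ] W := (Matrix.mulVecLin (1 - γ • P)⁻¹).restrict hW
  have hf : Function.Injective f := by
    intro x y hxy
    have h : (1 - γ • P)⁻¹ *ᵥ (x : σ → ℝ) = (1 - γ • P)⁻¹ *ᵥ (y : σ → ℝ) :=
      congrArg Subtype.val hxy
    have h' := congrArg ((1 - γ • P) *ᵥ ·) h
    simp only [Matrix.mulVec_mulVec, Matrix.mul_nonsing_inv _ hdet, Matrix.one_mulVec] at h'
    exact Subtype.ext h'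
  obtain ⟨w, hw⟩ := LinearMap.injective_iff_surjective.1 hf ⟨v, hv⟩
  have hwv : (1 - γ • P)⁻¹ *ᵥ (w : σ → ℝ) = v := congrArg Subtype.val hw
  have hvw : v - γ • P *ᵥ v = w := by
    rw [← Matrix.smul_mulVec, ← Matrix.one_mulVec v, Matrix.mulVec_mulVec, Matrix.mul_one,
      ← Matrix.sub_mulVec, ← hwv, Matrix.mulVec_mulVec, Matrix.mul_nonsing_inv _ hdet,
      Matrix.one_mulVec]
  have hPv : P *ᵥ v = γ⁻¹ • (v - w) := by
    rw [← hvw, sub_sub_cancel, inv_smul_smul₀ hγ]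
  rw [hPv]
  exact W.smul_mem _ (W.sub_mem hv w.2)

/-- The transition matrix of a deterministic map. -/
def detMatrix {ι : Type*} [DecidableEq ι] (f : ι → ι) : Matrix ι ι ℝ :=
  Matrix.of fun i j => if f i = j then 1 else 0

theorem isTransition_detMatrix {ι : Type*} [Fintype ι] [DecidableEq ι] (f : ι → ι) :
    IsTransition (detMatrix f) := by
  refine ⟨fun i j => ?_, fun i => by simp [detMatrix]⟩
  simp only [detMatrix, Matrix.of_apply]
  split_ifs <;> norm_num

theorem detMatrix_update_sub {ι : Type*} [DecidableEq ι] (o i j k l : ι) :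
    detMatrix (Function.update (fun _ => o) i j) k l - detMatrix (fun _ => o) k l
      = if k = i then ((if j = l then 1 else 0) - if o = l then 1 else 0) else 0 := by
  by_cases h : k = i
  · subst h; simp [detMatrix]
  · simp [detMatrix, h]

/-- Weighted Kronecker products of transition matrices, recorded with their total weight. -/
def kronSpan (α β : Type*) [Fintype α] [Fintype β] :
    Submodule ℝ (ℝ × Matrix (α × β) (α × β) ℝ) :=
  Submodule.span ℝ {z | ∃ A B, IsTransition A ∧ IsTransition B ∧ z = (1, kron A B)}

/-- A matrix whose partial row sums over each factor vanish is a combination, of total weight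
zero, of Kronecker products of transition matrices. -/
theorem zero_prodMk_mem_kronSpan {α β : Type*} [Fintype α] [Fintype β] [Nonempty α] [Nonempty β]
    [DecidableEq α] [DecidableEq β] (D : Matrix (α × β) (α × β) ℝ)
    (hA : ∀ p a, ∑ b, D p (a, b) = 0) (hB : ∀ p b, ∑ a, D p (a, b) = 0) :
    ((0 : ℝ), D) ∈ kronSpan α β := by
  obtain ⟨a₀⟩ := ‹Nonempty α›
  obtain ⟨b₀⟩ := ‹Nonempty β›
  let S (a a' : α) : Matrix α α ℝ := detMatrix (Function.update (fun _ => a₀) a a')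
  let T (b b' : β) : Matrix β β ℝ := detMatrix (Function.update (fun _ => b₀) b b')
  let S₀ : Matrix α α ℝ := detMatrix fun _ => a₀
  let T₀ : Matrix β β ℝ := detMatrix fun _ => b₀
  let z (p q : α × β) : ℝ × Matrix (α × β) (α × β) ℝ :=
    ((1, kron (S p.1 q.1) (T p.2 q.2)) - (1, kron (S p.1 q.1) T₀))
      - ((1, kron S₀ (T p.2 q.2)) - (1, kron S₀ T₀))
  have hz (p q) : z p q ∈ kronSpan α β := by
    have mem (f : α → α) (g : β → β) :
        ((1 : ℝ), kron (detMatrix f) (detMatrix g)) ∈ kronSpan α β :=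
      Submodule.subset_span
        ⟨_, _, isTransition_detMatrix f, isTransition_detMatrix g, rfl⟩
    exact sub_mem (sub_mem (mem _ _) (mem _ _)) (sub_mem (mem _ _) (mem _ _))
  have hz_snd (p q r s : α × β) : (z p q).2 r s
      = if r = p then ((if q.1 = s.1 then 1 else 0) - if a₀ = s.1 then 1 else 0)
          * ((if q.2 = s.2 then 1 else 0) - if b₀ = s.2 then 1 else 0) else 0 := by
    have : (z p q).2 r s = (S p.1 q.1 r.1 s.1 - S₀ r.1 s.1) * (T p.2 q.2 r.2 s.2 - T₀ r.2 s.2) := by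
      simp only [z, kron, Prod.snd_sub, Matrix.sub_apply, Matrix.of_apply]
      ring
    rw [this, detMatrix_update_sub, detMatrix_update_sub]
    by_cases h₁ : r.1 = p.1 <;> by_cases h₂ : r.2 = p.2 <;> simp [Prod.ext_iff, h₁, h₂]
  have hD : ((0 : ℝ), D) = ∑ p, ∑ q, D p q • z p q := by
    refine Prod.ext (by simp [Prod.fst_sum, z]) ?_
    ext r s
    simp only [Prod.snd_sum, Prod.smul_snd, Matrix.sum_apply, Matrix.smul_apply, hz_snd,
      smul_eq_mul, mul_ite, mul_zero]
    rw [Finset.sum_comm]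
    simp only [Finset.sum_ite_eq, Finset.mem_univ, if_true]
    have expand (q : α × β) : D r q * (((if q.1 = s.1 then 1 else 0) - if a₀ = s.1 then 1 else 0)
          * ((if q.2 = s.2 then 1 else 0) - if b₀ = s.2 then 1 else 0))
        = (if q.1 = s.1 then if q.2 = s.2 then D r q else 0 else 0)
          - (if b₀ = s.2 then 1 else 0) * (if q.1 = s.1 then D r q else 0)
          - (if a₀ = s.1 then 1 else 0) * (if q.2 = s.2 then D r q else 0)
          + (if a₀ = s.1 then 1 else 0) * (if b₀ = s.2 then 1 else 0) * D r q := by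
      split_ifs <;> ring
    simp only [expand, Finset.sum_add_distrib, Finset.sum_sub_distrib, ← Finset.mul_sum]
    have h₁ : ∑ q : α × β, (if q.1 = s.1 then if q.2 = s.2 then D r q else 0 else 0) = D r s := by
      simp [Fintype.sum_prod_type]
    have h₂ : ∑ q : α × β, (if q.1 = s.1 then D r q else 0) = 0 := by
      rw [Fintype.sum_prod_type_right, Finset.sum_congr rfl fun b _ =>
        Fintype.sum_ite_eq' s.1 fun a => D r (a, b)]
      exact hA r s.1
    have h₃ : ∑ q : α × β, (if q.2 = s.2 then D r q else 0) = 0 := by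
      rw [Fintype.sum_prod_type, Finset.sum_congr rfl fun a _ =>
        Fintype.sum_ite_eq' s.2 fun b => D r (a, b)]
      exact hB r s.2
    have h₄ : ∑ q : α × β, D r q = 0 := by
      rw [Fintype.sum_prod_type, Finset.sum_congr rfl fun a _ => hA r a, Finset.sum_const_zero]
    rw [h₁, h₂, h₃, h₄]
    ring
  rw [hD]
  exact sum_mem fun p _ => sum_mem fun q _ => Submodule.smul_mem _ _ (hz p q)

/-- Necessity: if the Q-value decomposes under every pair of rewards via some local
functions `Q_A`, `Q_B`, then `P` must be separable. -/
theorem stmt9 {α β : Type*} [Fintype α] [Fintype β] [Nonempty α] [Nonempty β]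
    [DecidableEq α] [DecidableEq β]
    (P : Matrix (α × β) (α × β) ℝ) (hP : IsTransition P)
    (γ : ℝ) (hγ0 : 0 < γ) (hγ1 : γ < 1)
    (QA : (α → ℝ) → α → ℝ) (QB : (β → ℝ) → β → ℝ)
    (hdec : ∀ (rA : α → ℝ) (rB : β → ℝ),
      ((1 - γ • P)⁻¹).mulVec (fun p => rA p.1 + rB p.2)
        = fun p => QA rA p.1 + QB rB p.2) :
    ∃ (K : ℕ) (x : Fin K → ℝ) (A : Fin K → Matrix α α ℝ) (B : Fin K → Matrix β β ℝ),
      (∑ j, x j = 1) ∧ (∀ j, IsTransition (A j)) ∧ (∀ j, IsTransition (B j)) ∧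
      P = ∑ j, x j • kron (A j) (B j) := by
  obtain ⟨a₀⟩ := id ‹Nonempty α›
  obtain ⟨b₀⟩ := id ‹Nonempty β›
  have hdet := hP.isUnit_det_one_sub_smul hγ0.le hγ1
  have hzero (a : α) (b : β) : QA 0 a + QB 0 b = 0 := by
    have h := congrFun (hdec 0 0) (a, b)
    have h0 : (fun p : α × β => (0 : α → ℝ) p.1 + (0 : β → ℝ) p.2) = 0 := by ext; simp
    rw [h0, Matrix.mulVec_zero] at h
    exact h.symm
  have hfst : ∀ v ∈ fiberConst (Prod.fst : α × β → α),
      (1 - γ • P)⁻¹ *ᵥ v ∈ fiberConst (Prod.fst : α × β → α) := by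
    intro v hv p q hpq
    have hv' : v = fun p => v (p.1, b₀) + (0 : β → ℝ) p.2 := by
      ext p; simpa using hv p (p.1, b₀) rfl
    rw [hv', hdec (fun a => v (a, b₀)) 0]
    simp only [hpq]
    linarith [hzero a₀ p.2, hzero a₀ q.2]
  have hsnd : ∀ v ∈ fiberConst (Prod.snd : α × β → β),
      (1 - γ • P)⁻¹ *ᵥ v ∈ fiberConst (Prod.snd : α × β → β) := by
    intro v hv p q hpq
    have hv' : v = fun p => (0 : α → ℝ) p.1 + v (a₀, p.2) := by
      ext p; simpa using hv p (a₀, p.2) rfl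
    rw [hv', hdec 0 (fun b => v (a₀, b))]
    simp only [hpq]
    linarith [hzero p.1 b₀, hzero q.1 b₀]
  let A₀ : Matrix α α ℝ := Matrix.of fun a a' => ∑ b', P (a, b₀) (a', b')
  let B₀ : Matrix β β ℝ := Matrix.of fun b b' => ∑ a', P (a₀, b) (a', b')
  have hA₀ : IsTransition A₀ := by
    refine ⟨fun _ _ => Finset.sum_nonneg fun _ _ => hP.1 _ _, fun a => ?_⟩
    rw [← hP.2 (a, b₀), Fintype.sum_prod_type]; rfl
  have hB₀ : IsTransition B₀ := by
    refine ⟨fun _ _ => Finset.sum_nonneg fun _ _ => hP.1 _ _, fun b => ?_⟩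
    rw [← hP.2 (a₀, b), Fintype.sum_prod_type_right]; rfl
  have hPA (p : α × β) (a' : α) : ∑ b', P p (a', b') = A₀ p.1 a' := by
    have hv : (fun q : α × β => if q.1 = a' then (1 : ℝ) else 0) ∈
        fiberConst (Prod.fst : α × β → α) := fun p q h => by simp only [h]
    have h := mulVec_mem_of_inv_mulVec_mem hγ0.ne' hdet hfst hv p (p.1, b₀) rfl
    simpa [Matrix.mulVec, dotProduct, Fintype.sum_prod_type_right, A₀] using h
  have hPB (p : α × β) (b' : β) : ∑ a', P p (a', b') = B₀ p.2 b' := by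
    have hv : (fun q : α × β => if q.2 = b' then (1 : ℝ) else 0) ∈
        fiberConst (Prod.snd : α × β → β) := fun p q h => by simp only [h]
    have h := mulVec_mem_of_inv_mulVec_mem hγ0.ne' hdet hsnd hv p (a₀, p.2) rfl
    simpa [Matrix.mulVec, dotProduct, Fintype.sum_prod_type, B₀] using h
  have hmem : ((1 : ℝ), P) ∈ kronSpan α β := by
    have hD := zero_prodMk_mem_kronSpan (P - kron A₀ B₀)
      (fun p a => by simp [kron, Finset.sum_sub_distrib, hPA, ← Finset.mul_sum, hB₀.2])
      (fun p b => by simp [kron, Finset.sum_sub_distrib, hPB, ← Finset.sum_mul, hA₀.2])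
    have h₀ : ((1 : ℝ), kron A₀ B₀) ∈ kronSpan α β :=
      Submodule.subset_span ⟨A₀, B₀, hA₀, hB₀, rfl⟩
    simpa using add_mem h₀ hD
  obtain ⟨K, x, g, hg⟩ := Submodule.mem_span_set'.1 hmem
  choose A B hA hB hAB using fun j => (g j).2
  refine ⟨K, x, A, B, ?_, hA, hB, ?_⟩
  · simpa [hAB, Prod.fst_sum] using congrArg Prod.fst hg
  · simpa [hAB, Prod.snd_sum] using (congrArg Prod.snd hg).symm
end

section
/- Let α and β be finite types, P a transition matrix over α × β with strictly positive stationary probability vector μ, and γ ∈ [0,1). Let r_A : α → ℝ and r_B : β → ℝ satisfy ‖r_A‖_∞ ≤ R_A and ‖r_B‖_∞ ≤ R_B. Suppose there exist a transition matrix M_A over α and a transition matrix M_B over β such that for every (a,b) ∈ α × β: (1/2) ∑_{a'} | ∑_{b'} P (a,b) (a',b') − M_A a a' | ≤ ε_A and (1/2) ∑_{b'} | ∑_{a'} P (a,b) (a',b') − M_B b b' | ≤ ε_B. Let P_A, P_B be the marginalized local transition matrices of P with respect to μ, and set Q = (I − γP)^{-1}(r_A ⊗ e + e ⊗ r_B),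 Q_A = (I − γP_A)^{-1} r_A, Q_B = (I − γP_B)^{-1} r_B. Then: (i) ‖P_A − M_A‖_TV ≤ ε_A and ‖P_B − M_B‖_TV ≤ ε_B; and (ii) ‖Q − (Q_A ⊗ e + e ⊗ Q_B)‖_∞ ≤ 4γ (ε_A R_A + ε_B R_B) / (1 − γ)². -/
open Matrix

theorem abs_sum_mul_le_mul {ι : Type*} [Fintype ι] (f v : ι → ℝ) {C : ℝ}
    (hv : ∀ i, |v i| ≤ C) : |∑ i, f i * v i| ≤ (∑ i, |f i|) * C := by
  rw [Finset.sum_mul]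
  refine (Finset.abs_sum_le_sum_abs _ _).trans (Finset.sum_le_sum fun i _ => ?_)
  rw [abs_mul]
  exact mul_le_mul_of_nonneg_left (hv i) (abs_nonneg _)

namespace IsTransition

variable {ι : Type*} [Fintype ι] {P : Matrix ι ι ℝ}

theorem abs_mulVec_le (hP : IsTransition P) {v : ι → ℝ} {C : ℝ} (hv : ∀ i, |v i| ≤ C) (i : ι) :
    |(P *ᵥ v) i| ≤ C := by
  have h := abs_sum_mul_le_mul (P i) v hv
  simp only [abs_of_nonneg (hP.1 i _), hP.2 i, one_mul] at h
  exact h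

theorem abs_le_div_one_sub (hP : IsTransition P) {γ : ℝ} (hγ0 : 0 ≤ γ) (hγ1 : γ < 1)
    {v : ι → ℝ} {C : ℝ} (hv : ∀ i, |v i - γ * (P *ᵥ v) i| ≤ C) (i : ι) :
    |v i| ≤ C / (1 - γ) := by
  have : Nonempty ι := ⟨i⟩
  obtain ⟨m, hm⟩ := Finite.exists_max fun j => |v j|
  refine (hm i).trans ?_
  rw [le_div_iff₀ (by linarith)]
  have hPm : γ * |(P *ᵥ v) m| ≤ γ * |v m| :=
    mul_le_mul_of_nonneg_left (hP.abs_mulVec_le hm m) hγ0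
  have htri := abs_sub_abs_le_abs_sub (v m) (γ * (P *ᵥ v) m)
  rw [abs_mul, abs_of_nonneg hγ0] at htri
  linarith [hv m]

variable [DecidableEq ι]

theorem isUnit_det_one_sub_smul_s11 (hP : IsTransition P) {γ : ℝ} (hγ0 : 0 ≤ γ) (hγ1 : γ < 1) :
    IsUnit (1 - γ • P).det := by
  rw [isUnit_iff_ne_zero]
  intro hdet
  obtain ⟨v, hv0, hv⟩ := Matrix.exists_mulVec_eq_zero_iff.mpr hdet
  refine hv0 (funext fun i => ?_)
  have hle := hP.abs_le_div_one_sub hγ0 hγ1 (v := v) (C := 0) (fun j => by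
    have h := congrFun hv j
    simp only [Matrix.sub_mulVec, Matrix.one_mulVec, Matrix.smul_mulVec, Pi.sub_apply,
      Pi.smul_apply, smul_eq_mul, Pi.zero_apply] at h
    rw [h, abs_zero]) i
  rw [zero_div] at hle
  exact abs_nonpos_iff.mp hle

theorem resolvent_sub_apply (hP : IsTransition P) {γ : ℝ} (hγ0 : 0 ≤ γ) (hγ1 : γ < 1)
    (r : ι → ℝ) (i : ι) :
    ((1 - γ • P)⁻¹ *ᵥ r) i - γ * (P *ᵥ ((1 - γ • P)⁻¹ *ᵥ r)) i = r i := by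
  have h : (1 - γ • P) *ᵥ ((1 - γ • P)⁻¹ *ᵥ r) = r := by
    rw [Matrix.mulVec_mulVec, Matrix.mul_nonsing_inv _ (hP.isUnit_det_one_sub_smul_s11 hγ0 hγ1),
      Matrix.one_mulVec]
  have h' := congrFun h i
  rwa [Matrix.sub_mulVec, Matrix.one_mulVec, Matrix.smul_mulVec] at h'

theorem abs_resolvent_le (hP : IsTransition P) {γ : ℝ} (hγ0 : 0 ≤ γ) (hγ1 : γ < 1)
    {r : ι → ℝ} {R : ℝ} (hr : ∀ i, |r i| ≤ R) (i : ι) :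
    |((1 - γ • P)⁻¹ *ᵥ r) i| ≤ R / (1 - γ) :=
  hP.abs_le_div_one_sub hγ0 hγ1
    (fun j => by rw [hP.resolvent_sub_apply hγ0 hγ1]; exact hr j) i

end IsTransition

section Local

variable {α β : Type*} [Fintype β] {μ : α × β → ℝ}

theorem sum_div_marginal_eq_one [Nonempty β] (hμ : ∀ p, 0 < μ p) (a : α) :
    ∑ b, μ (a, b) / ∑ b', μ (a, b') = 1 := by
  rw [← Finset.sum_div]
  exact div_self (Finset.sum_pos (fun b _ => hμ (a, b)) Finset.univ_nonempty).ne'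

theorem div_marginal_nonneg (hμ : ∀ p, 0 < μ p) (a : α) (b : β) :
    0 ≤ μ (a, b) / ∑ b', μ (a, b') :=
  div_nonneg (hμ _).le (Finset.sum_nonneg fun b' _ => (hμ (a, b')).le)

variable [Fintype α] {P : Matrix (α × β) (α × β) ℝ}

theorem IsTransition.localA [Nonempty β] (hP : IsTransition P) (hμ : ∀ p, 0 < μ p) :
    IsTransition (localA P μ) := by
  refine ⟨fun a a' => Finset.sum_nonneg fun b _ => mul_nonneg (div_marginal_nonneg hμ a b)
    (Finset.sum_nonneg fun b' _ => hP.1 _ _), fun a => ?_⟩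
  simp only [_root_.localA, Matrix.of_apply]
  rw [Finset.sum_comm]
  simp_rw [← Finset.mul_sum, ← Fintype.sum_prod_type', hP.2, mul_one]
  exact sum_div_marginal_eq_one hμ a

/-- Averaging the marginal rows against the conditional weights does not increase the
total-variation distance to `MA`. -/
theorem localA_tv_le [Nonempty β] (hμ : ∀ p, 0 < μ p) {MA : Matrix α α ℝ} {ε : ℝ}
    (h : ∀ a b, (1 / 2 : ℝ) * ∑ a', |(∑ b', P (a, b) (a', b')) - MA a a'| ≤ ε) (a : α) :
    (1 / 2 : ℝ) * ∑ a', |localA P μ a a' - MA a a'| ≤ ε := by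
  set w : β → ℝ := fun b => μ (a, b) / ∑ b', μ (a, b')
  have hw0 : ∀ b, 0 ≤ w b := div_marginal_nonneg hμ a
  have hw1 : ∑ b, w b = 1 := sum_div_marginal_eq_one hμ a
  have hentry : ∀ a', |localA P μ a a' - MA a a'| ≤
      ∑ b, w b * |(∑ b', P (a, b) (a', b')) - MA a a'| := fun a' => by
    have heq : localA P μ a a' - MA a a' =
        ∑ b, w b * ((∑ b', P (a, b) (a', b')) - MA a a') := by
      simp only [mul_sub, Finset.sum_sub_distrib]
      rw [← Finset.sum_mul, hw1, one_mul]
      rfl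
    rw [heq]
    refine (Finset.abs_sum_le_sum_abs _ _).trans_eq (Finset.sum_congr rfl fun b _ => ?_)
    rw [abs_mul, abs_of_nonneg (hw0 b)]
  calc (1 / 2 : ℝ) * ∑ a', |localA P μ a a' - MA a a'|
      ≤ (1 / 2 : ℝ) * ∑ a', ∑ b, w b * |(∑ b', P (a, b) (a', b')) - MA a a'| := by
        gcongr with a'
        exact hentry a'
    _ = ∑ b, w b * ((1 / 2 : ℝ) * ∑ a', |(∑ b', P (a, b) (a', b')) - MA a a'|) := by
        rw [Finset.sum_comm, Finset.mul_sum]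
        refine Finset.sum_congr rfl fun b _ => ?_
        rw [← Finset.mul_sum]
        ring
    _ ≤ ∑ b, w b * ε := by
        gcongr with b
        · exact hw0 b
        · exact h a b
    _ = ε := by rw [← Finset.sum_mul, hw1, one_mul]

theorem abs_mulVec_comp_fst_sub_le [Nonempty β] (hμ : ∀ p, 0 < μ p) {MA : Matrix α α ℝ} {ε : ℝ}
    (h : ∀ a b, (1 / 2 : ℝ) * ∑ a', |(∑ b', P (a, b) (a', b')) - MA a a'| ≤ ε)
    {x : α → ℝ} {C : ℝ} (hx : ∀ a, |x a| ≤ C) (p : α × β) :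
    |(P *ᵥ fun q => x q.1) p - (localA P μ *ᵥ x) p.1| ≤ 4 * ε * C := by
  obtain ⟨a, b⟩ := p
  have hC : 0 ≤ C := (abs_nonneg _).trans (hx a)
  have heq : (P *ᵥ fun q => x q.1) (a, b) - (localA P μ *ᵥ x) a =
      ∑ a', ((∑ b', P (a, b) (a', b')) - localA P μ a a') * x a' := by
    simp only [Matrix.mulVec, dotProduct, Fintype.sum_prod_type, sub_mul,
      Finset.sum_sub_distrib, Finset.sum_mul]
  have htv : ∑ a', |(∑ b', P (a, b) (a', b')) - localA P μ a a'| ≤ 4 * ε := by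
    have htri : ∑ a', |(∑ b', P (a, b) (a', b')) - localA P μ a a'| ≤
        ∑ a', (|(∑ b', P (a, b) (a', b')) - MA a a'| + |localA P μ a a' - MA a a'|) :=
      Finset.sum_le_sum fun a' _ => by
        rw [abs_sub_comm (localA P μ a a')]
        exact abs_sub_le _ _ _
    rw [Finset.sum_add_distrib] at htri
    linarith [h a b, localA_tv_le hμ h a]
  rw [heq]
  exact (abs_sum_mul_le_mul _ x hx).trans (mul_le_mul_of_nonneg_right htv hC)

theorem IsTransition.submatrix_equiv {ι κ : Type*} [Fintype ι] [Fintype κ] {P : Matrix ι ι ℝ}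
    (hP : IsTransition P) (e : κ ≃ ι) : IsTransition (P.submatrix e e) :=
  ⟨fun _ _ => hP.1 _ _, fun i => (e.sum_comp (P (e i))).trans (hP.2 _)⟩

theorem localB_eq_localA_swap (P : Matrix (α × β) (α × β) ℝ) (μ : α × β → ℝ) :
    localB P μ = localA (P.submatrix (Equiv.prodComm β α) (Equiv.prodComm β α))
      (μ ∘ Prod.swap) := rfl

theorem abs_mulVec_comp_snd_sub_le [Nonempty α] (hμ : ∀ p, 0 < μ p) {MB : Matrix β β ℝ} {ε : ℝ}
    (h : ∀ a b, (1 / 2 : ℝ) * ∑ b', |(∑ a', P (a, b) (a', b')) - MB b b'| ≤ ε)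
    {x : β → ℝ} {C : ℝ} (hx : ∀ b, |x b| ≤ C) (p : α × β) :
    |(P *ᵥ fun q => x q.2) p - (localB P μ *ᵥ x) p.2| ≤ 4 * ε * C := by
  have hμswap : ∀ p, 0 < (μ ∘ Prod.swap) p := fun p => hμ _
  have hswap : (P *ᵥ fun q => x q.2) p =
      (P.submatrix (Equiv.prodComm β α) (Equiv.prodComm β α) *ᵥ fun q => x q.1) p.swap :=
    ((Equiv.prodComm β α).sum_comp fun q => P p q * x q.2).symm
  rw [hswap, localB_eq_localA_swap]
  exact abs_mulVec_comp_fst_sub_le (P := P.submatrix (Equiv.prodComm β α) (Equiv.prodComm β α))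
    (MA := MB) hμswap (fun b a => h a b) hx p.swap

end Local

/-- Decomposition error bounded by the measure of Markov entanglement w.r.t. the
agent-wise total variation distance. -/
theorem stmt11 {α β : Type*} [Fintype α] [Fintype β] [DecidableEq α] [DecidableEq β]
    (P : Matrix (α × β) (α × β) ℝ) (hP : IsTransition P)
    (μ : α × β → ℝ) (hμpos : ∀ p, 0 < μ p) (hμsum : ∑ p, μ p = 1)
    (hstat : ∀ q, ∑ p, μ p * P p q = μ q)
    (γ RA RB εA εB : ℝ) (hγ0 : 0 ≤ γ) (hγ1 : γ < 1)
    (rA : α → ℝ) (rB : β → ℝ) (hrA : ∀ a, |rA a| ≤ RA) (hrB : ∀ b, |rB b| ≤ RB)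
    (MA : Matrix α α ℝ) (hMA : IsTransition MA)
    (MB : Matrix β β ℝ) (hMB : IsTransition MB)
    (hATVA : ∀ (a : α) (b : β),
      (1 / 2 : ℝ) * ∑ a', |(∑ b', P (a, b) (a', b')) - MA a a'| ≤ εA)
    (hATVB : ∀ (a : α) (b : β),
      (1 / 2 : ℝ) * ∑ b', |(∑ a', P (a, b) (a', b')) - MB b b'| ≤ εB) :
    (∀ a, (1 / 2 : ℝ) * ∑ a', |localA P μ a a' - MA a a'| ≤ εA) ∧
    (∀ b, (1 / 2 : ℝ) * ∑ b', |localB P μ b b' - MB b b'| ≤ εB) ∧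
    ∀ p, |((1 - γ • P)⁻¹).mulVec (fun q => rA q.1 + rB q.2) p
            - ((((1 - γ • localA P μ)⁻¹).mulVec rA) p.1
              + (((1 - γ • localB P μ)⁻¹).mulVec rB) p.2)|
        ≤ 4 * γ * (εA * RA + εB * RB) / (1 - γ) ^ 2 := by
  have hne : Nonempty (α × β) := by
    by_contra hempty
    rw [not_nonempty_iff] at hempty
    simp at hμsum
  have : Nonempty α := hne.map Prod.fst
  have : Nonempty β := hne.map Prod.snd
  have hμswap : ∀ p, 0 < (μ ∘ Prod.swap) p := fun p => hμpos _
  have hPA := hP.localA hμpos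
  have hPB := (hP.submatrix_equiv (Equiv.prodComm β α)).localA hμswap
  rw [← localB_eq_localA_swap] at hPB
  refine ⟨localA_tv_le hμpos hATVA, fun b => ?_, ?_⟩
  · rw [localB_eq_localA_swap]
    exact localA_tv_le (P := P.submatrix (Equiv.prodComm β α) (Equiv.prodComm β α))
      (MA := MB) hμswap (fun b a => hATVB a b) b
  set QA := (1 - γ • localA P μ)⁻¹ *ᵥ rA with hQA
  set QB := (1 - γ • localB P μ)⁻¹ *ᵥ rB with hQB
  set Q := (1 - γ • P)⁻¹ *ᵥ (fun q => rA q.1 + rB q.2) with hQ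
  have hA : ∀ p : α × β, |(P *ᵥ fun q => QA q.1) p - (localA P μ *ᵥ QA) p.1| ≤
      4 * εA * (RA / (1 - γ)) :=
    abs_mulVec_comp_fst_sub_le hμpos hATVA (hPA.abs_resolvent_le hγ0 hγ1 hrA)
  have hB : ∀ p : α × β, |(P *ᵥ fun q => QB q.2) p - (localB P μ *ᵥ QB) p.2| ≤
      4 * εB * (RB / (1 - γ)) :=
    abs_mulVec_comp_snd_sub_le hμpos hATVB (hPB.abs_resolvent_le hγ0 hγ1 hrB)
  have hres : ∀ p : α × β, |(Q p - (QA p.1 + QB p.2)) -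
      γ * (P *ᵥ fun q => Q q - (QA q.1 + QB q.2)) p| ≤
      γ * (4 * εA * (RA / (1 - γ)) + 4 * εB * (RB / (1 - γ))) := fun p => by
    have hsplit : (P *ᵥ fun q => Q q - (QA q.1 + QB q.2)) p =
        (P *ᵥ Q) p - ((P *ᵥ fun q => QA q.1) p + (P *ᵥ fun q => QB q.2) p) := by
      simp only [Matrix.mulVec, dotProduct, mul_sub, mul_add, Finset.sum_sub_distrib,
        Finset.sum_add_distrib]
    have hQeq := hP.resolvent_sub_apply hγ0 hγ1 (fun q => rA q.1 + rB q.2) p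
    have hQAeq := hPA.resolvent_sub_apply hγ0 hγ1 rA p.1
    have hQBeq := hPB.resolvent_sub_apply hγ0 hγ1 rB p.2
    rw [← hQ] at hQeq
    rw [← hQA] at hQAeq
    rw [← hQB] at hQBeq
    have heq : (Q p - (QA p.1 + QB p.2)) - γ * (P *ᵥ fun q => Q q - (QA q.1 + QB q.2)) p =
        γ * (((P *ᵥ fun q => QA q.1) p - (localA P μ *ᵥ QA) p.1) +
          ((P *ᵥ fun q => QB q.2) p - (localB P μ *ᵥ QB) p.2)) := by
      rw [hsplit]
      linear_combination hQeq - hQAeq - hQBeq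
    rw [heq, abs_mul, abs_of_nonneg hγ0]
    exact mul_le_mul_of_nonneg_left
      ((abs_add_le _ _).trans (add_le_add (hA p) (hB p))) hγ0
  intro p
  refine (hP.abs_le_div_one_sub hγ0 hγ1 hres p).trans_eq ?_
  have hγ : 1 - γ ≠ 0 := by linarith
  field_simp
end

section
/- Let α and β be finite types and P a transition matrix over α × β with strictly positive stationary probability vector μ. Then the marginalized local transition matrix P_A of P with respect to μ is itself a transition matrix over α, and the marginal μ_A(a) = ∑_b μ(a,b) is a stationary distribution of P_A, i.e. ∑_a μ_A(a) · P_A a a' = μ_A(a') for every a' ∈ α. -/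
open Matrix

/-- The marginalized local transition matrix `P_A` is itself a transition matrix, and the
marginal `μ_A(a) = ∑_b μ(a,b)` is a stationary distribution of `P_A`. -/
theorem stmt13 {α β : Type*} [Fintype α] [Fintype β]
    (P : Matrix (α × β) (α × β) ℝ) (hP : IsTransition P)
    (μ : α × β → ℝ) (hμpos : ∀ p, 0 < μ p) (hμsum : ∑ p, μ p = 1)
    (hstat : ∀ q, ∑ p, μ p * P p q = μ q) :
    IsTransition (localA P μ) ∧
    ∀ a', ∑ a, (∑ b, μ (a, b)) * localA P μ a a' = ∑ b, μ (a', b) := by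
  have hne : Nonempty β := by
    by_contra h
    rw [not_nonempty_iff] at h
    simp at hμsum
  have hpos : ∀ a, 0 < ∑ b, μ (a, b) := fun a =>
    Finset.sum_pos (fun b _ => hμpos (a, b)) Finset.univ_nonempty
  refine ⟨⟨fun a a' => ?_, fun a => ?_⟩, fun a' => ?_⟩
  · exact Finset.sum_nonneg fun b _ => mul_nonneg
      (div_nonneg (hμpos _).le (hpos a).le) (Finset.sum_nonneg fun b' _ => hP.1 _ _)
  · simp only [localA, Matrix.of_apply]
    rw [Finset.sum_comm]
    simp_rw [← Finset.mul_sum, ← Fintype.sum_prod_type, hP.2, mul_one, ← Finset.sum_div]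
    exact div_self (hpos a).ne'
  · have hmul : ∀ a, (∑ b, μ (a, b)) * localA P μ a a' =
        ∑ b, ∑ b', μ (a, b) * P (a, b) (a', b') := fun a => by
      simp only [localA, Matrix.of_apply]
      rw [Finset.mul_sum]
      refine Finset.sum_congr rfl fun b _ => ?_
      rw [← mul_assoc, mul_div_cancel₀ _ (hpos a).ne', Finset.mul_sum]
    simp_rw [hmul]
    rw [← Fintype.sum_prod_type' (fun a b => ∑ b', μ (a, b) * P (a, b) (a', b')),
      Finset.sum_comm]
    exact Finset.sum_congr rfl fun b' _ => hstat (a', b')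
end

section
/- Let S_A, A_A, S_B, A_B be finite types, and put α = S_A × A_A, β = S_B × A_B. Let p_A : S_A → A_A → S_A → ℝ and p_B : S_B → A_B → S_B → ℝ be transition kernels (nonnegative, with ∑_{s'} p_A s a s' = 1 and ∑_{s'} p_B s a s' = 1 for all (s,a)), and let π : S_A → S_B → (A_A × A_B) → ℝ be a policy (nonnegative, with ∑_{(a_A,a_B)} π s_A s_B (a_A,a_B) = 1 for all states). Define the induced transition matrix P over α × β by P ((s_A,a_A),(s_B,a_B)) ((s'_A,a'_A),(s'_B,a'_B)) = p_A s_A a_A s'_A · p_B s_B a_B s'_B · π s'_A s'_B (a'_A,a'_B), and let μ be a strictly positive stationary probability vector for P. Then for every local policy π' : S_A → A_A → ℝ (nonnegative with ∑_{a} π' s a = 1 for all s), (1/2) ∑_{((s_A,a_A),(s_B,a_B))} μ((s_A,a_A),(s_B,a_B)) · ∑_{(s'_A,a'_A)} | ∑_{(s'_B,a'_B)} P ((s_A,a_A),(s_B,a_B)) ((s'_A,a'_A),(s'_B,a'_B)) − p_A s_A a_A s'_A · π' s'_A a'_A | ≤ (1/2) ∑_{(s'_A,s'_B)} ν(s'_A,s'_B)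 · ∑_{a'_A} | π_A s'_A s'_B a'_A − π' s'_A a'_A |, where ν(s'_A,s'_B) = ∑_{(a_A,a_B)} μ((s'_A,a_A),(s'_B,a_B)) is the state-marginal of μ and π_A s_A s_B a_A = ∑_{a_B} π s_A s_B (a_A,a_B). -/
open Matrix

/-- The transition matrix over state–action pairs induced by local kernels `pA`, `pB` and
a joint policy `pol`. -/
def inducedP {SA AA SB AB : Type*}
    (pA : SA → AA → SA → ℝ) (pB : SB → AB → SB → ℝ)
    (pol : SA → SB → AA × AB → ℝ) :
    Matrix ((SA × AA) × (SB × AB)) ((SA × AA) × (SB × AB)) ℝ :=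
  Matrix.of fun p q =>
    pA p.1.1 p.1.2 q.1.1 * pB p.2.1 p.2.2 q.2.1 * pol q.1.1 q.2.1 (q.1.2, q.2.2)

/-- The state marginal of a stationary vector is the one-step image of that vector under the
product of the local kernels. -/
theorem stateMarginal_eq_of_stationary {SA AA SB AB : Type*}
    [Fintype SA] [Fintype AA] [Fintype SB] [Fintype AB]
    (pA : SA → AA → SA → ℝ) (pB : SB → AB → SB → ℝ)
    (pol : SA → SB → AA × AB → ℝ) (hpol1 : ∀ sA sB, ∑ a, pol sA sB a = 1)
    (μ : (SA × AA) × (SB × AB) → ℝ)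
    (hstat : ∀ q, ∑ p, μ p * inducedP pA pB pol p q = μ q) (sA : SA) (sB : SB) :
    ∑ a : AA × AB, μ ((sA, a.1), (sB, a.2)) =
      ∑ p, μ p * (pA p.1.1 p.1.2 sA * pB p.2.1 p.2.2 sB) := by
  calc ∑ a : AA × AB, μ ((sA, a.1), (sB, a.2))
      = ∑ a : AA × AB, ∑ p, μ p * inducedP pA pB pol p ((sA, a.1), (sB, a.2)) := by
        simp only [hstat]
    _ = ∑ p, μ p * (pA p.1.1 p.1.2 sA * pB p.2.1 p.2.2 sB) := by
        rw [Finset.sum_comm]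
        refine Finset.sum_congr rfl fun p _ => ?_
        simp only [inducedP, Matrix.of_apply, Prod.mk.eta, ← Finset.mul_sum, hpol1, mul_one]

/-- Each row's agent-`A` deviation is at most the expected deviation of the agent-`A` marginal
policy from the local policy at the next state. -/
theorem sum_abs_inducedP_sub_le {SA AA SB AB : Type*}
    [Fintype SA] [Fintype AA] [Fintype SB] [Fintype AB]
    (pA : SA → AA → SA → ℝ) (hpA0 : ∀ s a s', 0 ≤ pA s a s')
    (pB : SB → AB → SB → ℝ) (hpB0 : ∀ s a s', 0 ≤ pB s a s')
    (hpB1 : ∀ s a, ∑ s', pB s a s' = 1)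
    (pol : SA → SB → AA × AB → ℝ) (pol' : SA → AA → ℝ) (p : (SA × AA) × (SB × AB)) :
    ∑ q1 : SA × AA, |(∑ q2 : SB × AB, inducedP pA pB pol p (q1, q2))
        - pA p.1.1 p.1.2 q1.1 * pol' q1.1 q1.2|
      ≤ ∑ s' : SA × SB, pA p.1.1 p.1.2 s'.1 * pB p.2.1 p.2.2 s'.2 *
          ∑ aA, |(∑ aB, pol s'.1 s'.2 (aA, aB)) - pol' s'.1 aA| := by
  rw [Fintype.sum_prod_type, Fintype.sum_prod_type]
  refine Finset.sum_le_sum fun sA _ => ?_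
  simp only [Finset.mul_sum]
  rw [Finset.sum_comm]
  refine Finset.sum_le_sum fun aA _ => ?_
  have expand : (∑ q2 : SB × AB, inducedP pA pB pol p ((sA, aA), q2))
      - pA p.1.1 p.1.2 sA * pol' sA aA
      = ∑ sB, pA p.1.1 p.1.2 sA * pB p.2.1 p.2.2 sB *
          ((∑ aB, pol sA sB (aA, aB)) - pol' sA aA) := by
    simp only [inducedP, Matrix.of_apply, Fintype.sum_prod_type, mul_sub,
      Finset.sum_sub_distrib, ← Finset.mul_sum, ← Finset.sum_mul, hpB1, mul_one]
  rw [expand]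
  refine (Finset.abs_sum_le_sum_abs _ _).trans_eq (Finset.sum_congr rfl fun sB _ => ?_)
  rw [abs_mul, abs_of_nonneg (mul_nonneg (hpA0 _ _ _) (hpB0 _ _ _))]

/-- For weakly-coupled two-agent MDPs, the `μ`-weighted per-row agent-`A` total-variation
expression is bounded by the `μ`-weighted distance between the global policy and any
local policy `pol'` of agent `A`. -/
theorem stmt15 {SA AA SB AB : Type*} [Fintype SA] [Fintype AA] [Fintype SB] [Fintype AB]
    (pA : SA → AA → SA → ℝ) (hpA0 : ∀ s a s', 0 ≤ pA s a s')
    (hpA1 : ∀ s a, ∑ s', pA s a s' = 1)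
    (pB : SB → AB → SB → ℝ) (hpB0 : ∀ s a s', 0 ≤ pB s a s')
    (hpB1 : ∀ s a, ∑ s', pB s a s' = 1)
    (pol : SA → SB → AA × AB → ℝ) (hpol0 : ∀ sA sB a, 0 ≤ pol sA sB a)
    (hpol1 : ∀ sA sB, ∑ a, pol sA sB a = 1)
    (μ : (SA × AA) × (SB × AB) → ℝ) (hμpos : ∀ p, 0 < μ p) (hμsum : ∑ p, μ p = 1)
    (hstat : ∀ q, ∑ p, μ p * inducedP pA pB pol p q = μ q)
    (pol' : SA → AA → ℝ) (hpol'0 : ∀ s a, 0 ≤ pol' s a)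
    (hpol'1 : ∀ s, ∑ a, pol' s a = 1) :
    (1 / 2 : ℝ) * ∑ p, μ p * ∑ q1 : SA × AA,
        |(∑ q2 : SB × AB, inducedP pA pB pol p (q1, q2))
          - pA p.1.1 p.1.2 q1.1 * pol' q1.1 q1.2|
      ≤ (1 / 2 : ℝ) * ∑ s' : SA × SB,
          (∑ a : AA × AB, μ ((s'.1, a.1), (s'.2, a.2))) *
            ∑ aA, |(∑ aB, pol s'.1 s'.2 (aA, aB)) - pol' s'.1 aA| := by
  refine mul_le_mul_of_nonneg_left ?_ (by norm_num)
  refine (Finset.sum_le_sum fun p _ => mul_le_mul_of_nonneg_left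
    (sum_abs_inducedP_sub_le pA hpA0 pB hpB0 hpB1 pol pol' p) (hμpos p).le).trans_eq ?_
  simp only [stateMarginal_eq_of_stationary pA pB pol hpol1 μ hstat]
  simp only [Finset.mul_sum (s := (Finset.univ : Finset (SA × SB)))]
  rw [Finset.sum_comm]
  refine Finset.sum_congr rfl fun s' _ => ?_
  rw [Finset.sum_mul]
  exact Finset.sum_congr rfl fun p _ => (mul_assoc _ _ _).symm
end

section
/- Let E₀₀ = [[1,0],[1,0]], E₁₀ = [[0,1],[1,0]], E₁₁ = [[0,1],[0,1]] (each a 2 × 2 row-stochastic matrix), and let P be the 4 × 4 matrix, indexed by (Fin 2 × Fin 2) in lexicographic order, with rows (1/2, 0, 0, 1/2), (1/2, 0, 0, 1/2), (1/2, 0, 0, 1/2), (0, 1/2, 1/2, 0). Then: (i) P = (1/2) E₀₀ ⊗ E₀₀ + (1/2) E₁₀ ⊗ E₁₁ + (1/2) E₁₁ ⊗ E₁₀ − (1/2) E₁₀ ⊗ E₁₀, so P is a transition matrix that is separable (a linear combination of Kronecker products of 2 × 2 row-stochastic matrices with coefficients summing to 1); but (ii) there do NOT exist a finite index set K, nonnegative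 reals x_j with ∑_{j∈K} x_j = 1, and 2 × 2 row-stochastic matrices A_j, B_j, such that P = ∑_{j∈K} x_j (A_j ⊗ B_j). -/
open Matrix

def E00 : Matrix (Fin 2) (Fin 2) ℝ := !![1, 0; 1, 0]
def E10 : Matrix (Fin 2) (Fin 2) ℝ := !![0, 1; 1, 0]
def E11 : Matrix (Fin 2) (Fin 2) ℝ := !![0, 1; 0, 1]

/-- The 4 × 4 matrix (indexed by `Fin 2 × Fin 2` lexicographically) with rows
`(1/2,0,0,1/2)`, `(1/2,0,0,1/2)`, `(1/2,0,0,1/2)`, `(0,1/2,1/2,0)`. -/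
noncomputable def Pneg : Matrix (Fin 2 × Fin 2) (Fin 2 × Fin 2) ℝ :=
  Matrix.of fun p q =>
    if p = (1, 1) then (if q.1 = q.2 then 0 else 1 / 2)
    else (if q.1 = q.2 then 1 / 2 else 0)

/-- A Clauser–Horne type Bell inequality for numbers in the unit interval. -/
lemma clauserHorne_nonneg {a c b d : ℝ} (ha : 0 ≤ a) (ha1 : a ≤ 1) (hc : 0 ≤ c)
    (hc1 : c ≤ 1) (hb : 0 ≤ b) (hb1 : b ≤ 1) (hd : 0 ≤ d) (hd1 : d ≤ 1) :
    0 ≤ a + b - a * b - a * d - c * b + c * d := by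
  have key : a + b - a * b - a * d - c * b + c * d =
      a * (1 - b) * (1 - d) + b * (1 - a) * (1 - c) + a * b * ((1 - c) * (1 - d)) +
        c * d * (1 - a * b) := by ring
  have hab : 0 ≤ 1 - a * b := sub_nonneg.2 (mul_le_one₀ ha1 hb hb1)
  rw [← sub_nonneg] at ha1 hc1 hb1 hd1
  rw [key]
  positivity

/-- The total mass which a matrix on `Fin 2 × Fin 2` puts on the entries where `Pneg`
vanishes. -/
def offSupportMass : Matrix (Fin 2 × Fin 2) (Fin 2 × Fin 2) ℝ →ₗ[ℝ] ℝ where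
  toFun P := P (0, 0) (0, 1) + P (0, 0) (1, 0) + P (0, 1) (0, 1) + P (0, 1) (1, 0) +
    P (1, 0) (0, 1) + P (1, 0) (1, 0) + P (1, 1) (0, 0) + P (1, 1) (1, 1)
  map_add' P Q := by simp only [Matrix.add_apply]; ring
  map_smul' c P := by simp only [Matrix.smul_apply, smul_eq_mul, RingHom.id_apply]; ring

lemma offSupportMass_Pneg : offSupportMass Pneg = 0 := by
  simp [offSupportMass, Pneg]

lemma IsTransition.apply_one {A : Matrix (Fin 2) (Fin 2) ℝ} (hA : IsTransition A) (i : Fin 2) :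
    A i 1 = 1 - A i 0 := by
  have := hA.2 i
  rw [Fin.sum_univ_two] at this
  linarith

lemma IsTransition.apply_zero_le_one {A : Matrix (Fin 2) (Fin 2) ℝ} (hA : IsTransition A)
    (i : Fin 2) : A i 0 ≤ 1 := by
  have := hA.1 i 1
  rw [hA.apply_one] at this
  linarith

lemma one_le_offSupportMass_kron {A B : Matrix (Fin 2) (Fin 2) ℝ} (hA : IsTransition A)
    (hB : IsTransition B) : 1 ≤ offSupportMass (kron A B) := by
  have := clauserHorne_nonneg (hA.1 0 0) (hA.apply_zero_le_one 0) (hA.1 1 0)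
    (hA.apply_zero_le_one 1) (hB.1 0 0) (hB.apply_zero_le_one 0) (hB.1 1 0)
    (hB.apply_zero_le_one 1)
  simp only [offSupportMass, kron, LinearMap.coe_mk, AddHom.coe_mk, Matrix.of_apply,
    hA.apply_one, hB.apply_one]
  linarith

/-- `Pneg` is a separable transition matrix (a linear combination, with coefficients
summing to 1, of Kronecker products of row-stochastic matrices, some coefficients
negative), but it admits NO representation as a convex combination of Kronecker products
of row-stochastic matrices. -/
theorem stmt16 :
    (Pneg = (1 / 2 : ℝ) • kron E00 E00 + (1 / 2 : ℝ) • kron E10 E11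
        + (1 / 2 : ℝ) • kron E11 E10 - (1 / 2 : ℝ) • kron E10 E10)
    ∧ IsTransition Pneg
    ∧ ¬ ∃ (K : ℕ) (x : Fin K → ℝ)
          (A B : Fin K → Matrix (Fin 2) (Fin 2) ℝ),
          (∀ j, 0 ≤ x j) ∧ (∑ j, x j = 1) ∧ (∀ j, IsTransition (A j)) ∧
          (∀ j, IsTransition (B j)) ∧ Pneg = ∑ j, x j • kron (A j) (B j) := by
  refine ⟨?_, ⟨?_, ?_⟩, ?_⟩
  · ext ⟨i, j⟩ ⟨k, l⟩
    fin_cases i <;> fin_cases j <;> fin_cases k <;> fin_cases l <;>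
      norm_num [Pneg, kron, E00, E10, E11]
  · intro p q
    simp only [Pneg, Matrix.of_apply]
    split_ifs <;> norm_num
  · rintro ⟨i, j⟩
    fin_cases i <;> fin_cases j <;> norm_num [Pneg, Fintype.sum_prod_type]
  · rintro ⟨K, x, A, B, hx, hsum, hA, hB, hP⟩
    have hzero : ∑ j, x j * offSupportMass (kron (A j) (B j)) = 0 := by
      simpa [offSupportMass_Pneg] using (congrArg offSupportMass hP).symm
    have hle : ∑ j, x j ≤ ∑ j, x j * offSupportMass (kron (A j) (B j)) :=
      Finset.sum_le_sum fun j _ =>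
        le_mul_of_one_le_right (hx j) (one_le_offSupportMass_kron (hA j) (hB j))
    linarith
end

section
/- Let S_A and S_B be finite types. Let p_A : S_A → Fin 2 → S_A → ℝ and p_B : S_B → Fin 2 → S_B → ℝ be transition kernels (nonnegative, with ∑_{s'} p_A s a s' = 1 and ∑_{s'} p_B s a s' = 1 for all (s,a)). Let π : Fin 2 × Fin 2 → ℝ be the policy with π(0,1) = π(1,0) = 1/2 and π(0,0) = π(1,1) = 0. For i ∈ {A,B} and action a ∈ Fin 2, define the matrix P_i^a over S_i × Fin 2 by P_i^a (s,ã) (s',a') = p_i s ã s' · [a' = a] (indicator). Define the policy-induced transition matrix P^π over (S_A × Fin 2) × (S_B × Fin 2) by P^π ((s_A,a_A),(s_B,a_B)) ((s'_A,a'_A),(s'_B,a'_B)) = p_A s_A a_A s'_A · p_B s_B a_B s'_B · π(a'_A, a'_B). Then P^π = (1/2) P_A^0 ⊗ P_B^1 + (1/2) P_A^1 ⊗ P_B^0; in particular P^π is separable although the agents' actions are coupled. -/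
open Matrix

/-- The matrix `P_i^a` over state–action pairs: transition by the kernel, then
deterministically take action `a`. -/
def Pact {S : Type*} (p : S → Fin 2 → S → ℝ) (a : Fin 2) :
    Matrix (S × Fin 2) (S × Fin 2) ℝ :=
  Matrix.of fun q q' => p q.1 q.2 q'.1 * (if q'.2 = a then 1 else 0)

/-- The shared-randomness policy: activate exactly one of the two agents, each with
probability 1/2. -/
noncomputable def sharedPol : Fin 2 × Fin 2 → ℝ :=
  fun a => if a = (0, 1) ∨ a = (1, 0) then (1 / 2 : ℝ) else 0

/-- The policy-induced global transition matrix under the shared-randomness policy. -/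
noncomputable def inducedShared {SA SB : Type*}
    (pA : SA → Fin 2 → SA → ℝ) (pB : SB → Fin 2 → SB → ℝ) :
    Matrix ((SA × Fin 2) × (SB × Fin 2)) ((SA × Fin 2) × (SB × Fin 2)) ℝ :=
  Matrix.of fun p q =>
    pA p.1.1 p.1.2 q.1.1 * pB p.2.1 p.2.2 q.2.1 * sharedPol (q.1.2, q.2.2)

theorem isTransition_Pact {S : Type*} [Fintype S] {p : S → Fin 2 → S → ℝ}
    (hp0 : ∀ s a s', 0 ≤ p s a s') (hp1 : ∀ s a, ∑ s', p s a s' = 1) (a : Fin 2) :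
    IsTransition (Pact p a) := by
  refine ⟨fun q q' => mul_nonneg (hp0 _ _ _) (by split_ifs <;> norm_num), fun q => ?_⟩
  simp [Pact, Fintype.sum_prod_type, hp1]

theorem inducedShared_eq {SA SB : Type*}
    (pA : SA → Fin 2 → SA → ℝ) (pB : SB → Fin 2 → SB → ℝ) :
    inducedShared pA pB
      = (1 / 2 : ℝ) • kron (Pact pA 0) (Pact pB 1)
        + (1 / 2 : ℝ) • kron (Pact pA 1) (Pact pB 0) := by
  ext ⟨⟨sA, aA⟩, ⟨sB, aB⟩⟩ ⟨⟨tA, bA⟩, ⟨tB, bB⟩⟩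
  fin_cases bA <;> fin_cases bB <;>
    simp [inducedShared, kron, Pact, sharedPol, mul_comm]

/-- Shared randomness: although the agents' actions are coupled, the policy-induced
transition matrix equals `½ P_A⁰ ⊗ P_B¹ + ½ P_A¹ ⊗ P_B⁰`; in particular it is
separable. -/
theorem stmt17 {SA SB : Type*} [Fintype SA] [Fintype SB]
    (pA : SA → Fin 2 → SA → ℝ) (hpA0 : ∀ s a s', 0 ≤ pA s a s')
    (hpA1 : ∀ s a, ∑ s', pA s a s' = 1)
    (pB : SB → Fin 2 → SB → ℝ) (hpB0 : ∀ s a s', 0 ≤ pB s a s')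
    (hpB1 : ∀ s a, ∑ s', pB s a s' = 1) :
    inducedShared pA pB
        = (1 / 2 : ℝ) • kron (Pact pA 0) (Pact pB 1)
          + (1 / 2 : ℝ) • kron (Pact pA 1) (Pact pB 0)
    ∧ ∃ (K : ℕ) (x : Fin K → ℝ)
        (A : Fin K → Matrix (SA × Fin 2) (SA × Fin 2) ℝ)
        (B : Fin K → Matrix (SB × Fin 2) (SB × Fin 2) ℝ),
        (∑ j, x j = 1) ∧ (∀ j, IsTransition (A j)) ∧ (∀ j, IsTransition (B j)) ∧
        inducedShared pA pB = ∑ j, x j • kron (A j) (B j) := by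
  refine ⟨inducedShared_eq pA pB, 2, fun _ => 1 / 2, Pact pA, ![Pact pB 1, Pact pB 0],
    by norm_num, isTransition_Pact hpA0 hpA1, ?_, ?_⟩
  · intro j
    fin_cases j
    · exact isTransition_Pact hpB0 hpB1 1
    · exact isTransition_Pact hpB0 hpB1 0
  · simpa [Fin.sum_univ_two] using inducedShared_eq pA pB
end
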